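/- arXiv:2510.27670 — 2 statements merged into one kernel-verified Lean document; each statement's English description precedes it below -/
import Mathlib

section
/- Let A₁, A₂, A₃ be hermitian 4×4 complex matrices whose joint numerical range W = W(A₁,A₂,A₃) has dimension 3. If G₁, G₂, G₃ are three mutually distinct one-dimensional faces of W whose intersection G₁ ∩ G₂ ∩ G₃ is nonempty, then this intersection is a singleton {p} and p is a corner point of W. -/
open Matrix ComplexOrder

noncomputable section

/-- A density matrix: positive semidefinite with unit trace. -/
def IsDensity {n : Type*} [Fintype n] (ρ : Matrix n n ℂ) : Prop :=
  ρ.PosSemidef ∧ ρ.trace = 1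

/-- The measurement map `ρ ↦ (tr ρA₁, …, tr ρA_k)` (the traces are real for
hermitian matrices). -/
def wpt {n : Type*} [Fintype n] {k : ℕ} (A : Fin k → Matrix n n ℂ)
    (ρ : Matrix n n ℂ) : Fin k → ℝ :=
  fun i => ((ρ * A i).trace).re

/-- The joint numerical range of `k` matrices. -/
def JNR {n : Type*} [Fintype n] {k : ℕ} (A : Fin k → Matrix n n ℂ) :
    Set (Fin k → ℝ) :=
  wpt A '' {ρ | IsDensity ρ}

/-- `F` is a face of the convex set `C`: a convex subset such that whenever an
open segment between two points of `C` meets `F`, both endpoints lie in `F`. -/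
def IsFaceOf {E : Type*} [AddCommGroup E] [Module ℝ E] (C F : Set E) : Prop :=
  Convex ℝ F ∧ IsExtreme ℝ C F

/-- The dimension of a convex set: the dimension of its affine hull. -/
def convDim {E : Type*} [AddCommGroup E] [Module ℝ E] (F : Set E) : ℕ :=
  Module.finrank ℝ (affineSpan ℝ F).direction

/-- Euclidean dot product on `Fin d → ℝ`. -/
def dotR {d : ℕ} (u v : Fin d → ℝ) : ℝ := ∑ i, u i * v i

/-- `F` is an exposed face of `C`: the set of minimizers of a linear functional. -/
def IsExposedFace {d : ℕ} (C F : Set (Fin d → ℝ)) : Prop :=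
  ∃ u : Fin d → ℝ, F = {x ∈ C | ∀ y ∈ C, dotR u x ≤ dotR u y}

/-- The normal cone of `C` at `p`. -/
def normalConeAt {d : ℕ} (C : Set (Fin d → ℝ)) (p : Fin d → ℝ) :
    Set (Fin d → ℝ) :=
  {u | ∀ y ∈ C, 0 ≤ dotR (y - p) u}

/-- `p` is a corner point of `C` if the normal cone of `C` at `p` spans `ℝ^d`. -/
def IsCornerPoint {d : ℕ} (C : Set (Fin d → ℝ)) (p : Fin d → ℝ) : Prop :=
  p ∈ C ∧ Submodule.span ℝ (normalConeAt C p) = ⊤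

/-- The closed unit disk of `ℝ²`. -/
def unitDisk2 : Set (Fin 2 → ℝ) := {v | v 0 ^ 2 + v 1 ^ 2 ≤ 1}

/-- An elliptic disk in `ℝ³`: the image of the closed unit disk of `ℝ²` under an
injective affine map. -/
def IsEllipticDisk (F : Set (Fin 3 → ℝ)) : Prop :=
  ∃ f : (Fin 2 → ℝ) →ᵃ[ℝ] (Fin 3 → ℝ), Function.Injective f ∧ F = f '' unitDisk2

/-- A non-elliptic face of `W`: a two-dimensional face that is not an elliptic
disk. -/
def IsNonEllipticFace (W F : Set (Fin 3 → ℝ)) : Prop :=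
  IsFaceOf W F ∧ convDim F = 2 ∧ ¬ IsEllipticDisk F

/-- A rank-3 face of the joint numerical range of `A`. -/
def IsRank3Face {k : ℕ} (A : Fin k → Matrix (Fin 4) (Fin 4) ℂ)
    (F : Set (Fin k → ℝ)) : Prop :=
  F.Nonempty ∧ IsFaceOf (JNR A) F ∧
    ∃ P : Matrix (Fin 4) (Fin 4) ℂ, Pᴴ = P ∧ P * P = P ∧ P.rank = 3 ∧
      ∀ ρ : Matrix (Fin 4) (Fin 4) ℂ, IsDensity ρ → (wpt A ρ ∈ F ↔ P * ρ * P = ρ)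


section Abstract

theorem dotR_add_left {d : ℕ} (a b u : Fin d → ℝ) : dotR (a + b) u = dotR a u + dotR b u := by
  simp [dotR, add_mul, Finset.sum_add_distrib]

theorem dotR_smul_left {d : ℕ} (c : ℝ) (a u : Fin d → ℝ) : dotR (c • a) u = c * dotR a u := by
  simp [dotR, Finset.mul_sum, mul_assoc]

theorem dotR_add_right {d : ℕ} (a b u : Fin d → ℝ) : dotR u (a + b) = dotR u a + dotR u b := by
  simp [dotR, mul_add, Finset.sum_add_distrib]

theorem dotR_smul_right {d : ℕ} (c : ℝ) (a u : Fin d → ℝ) : dotR u (c • a) = c * dotR u a := by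
  simp [dotR, Finset.mul_sum, mul_left_comm]

theorem dotR_zero_left {d : ℕ} (u : Fin d → ℝ) : dotR 0 u = 0 := by
  simp [dotR]

theorem dotR_zero_right {d : ℕ} (u : Fin d → ℝ) : dotR u 0 = 0 := by
  simp [dotR]

theorem dual_eq_dotR {d : ℕ} (φ : StrongDual ℝ (Fin d → ℝ)) :
    ∃ u : Fin d → ℝ, ∀ x, φ x = dotR x u := by
  refine ⟨fun i => φ (Pi.single i 1), fun x => ?_⟩
  have h := (φ : (Fin d → ℝ) →ₗ[ℝ] ℝ).pi_apply_eq_sum_univ x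
  simp only [ContinuousLinearMap.coe_coe, smul_eq_mul] at h
  rw [h, dotR]
  refine Finset.sum_congr rfl fun i _ => ?_
  congr 2
  ext j
  simp [Pi.single_apply, eq_comm]

theorem face_cone {V : Type*} [AddCommGroup V] [Module ℝ V] {C H : Set V}
    (hC : Convex ℝ C) (hH : Convex ℝ H) (hE : IsExtreme ℝ C H)
    (h0 : (0 : V) ∈ H) {x y z g : V} (hx : x ∈ C) (hy : y ∈ C) (hz : z ∈ C) (hg : g ∈ H)
    {a b c t : ℝ} (ha : 0 < a) (hb : 0 ≤ b) (hc : 0 ≤ c) (ht : 0 ≤ t)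
    (h : a • x + b • y + c • z = t • g) : x ∈ H := by
  set s := a + b + c + t + 1 with hs
  have hs0 : 0 < s := by positivity
  have hsa : 0 < s - a := by rw [hs]; linarith
  have h0C : (0 : V) ∈ C := hE.subset h0
  have hm : (t / s) • g ∈ H := by
    have := hH hg h0 (a := t / s) (b := 1 - t / s) (by positivity)
      (by rw [sub_nonneg, div_le_one hs0]; rw [hs]; linarith) (by ring)
    simpa using this
  have hw : (b / (s - a)) • y + (c / (s - a)) • z ∈ C := by
    have h1 := hC.sum_mem (t := Finset.univ) (w := ![b / (s - a), c / (s - a), (t + 1) / (s - a)])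
      (z := ![y, z, 0]) (by
        intro i _
        fin_cases i
        · simp; positivity
        · simp; positivity
        · simp; positivity) (by
        simp only [Fin.sum_univ_three]
        simp
        rw [← add_div, ← add_div, div_eq_one_iff_eq hsa.ne']
        rw [hs]; ring) (by
        intro i _
        fin_cases i <;> simp [hy, hz, h0C])
    simpa [Fin.sum_univ_three] using h1
  refine hE.left_mem_of_mem_openSegment hx hw hm ⟨a / s, (s - a) / s, by positivity, by positivity,
    by field_simp; ring, ?_⟩
  rw [smul_add, smul_smul, smul_smul, div_mul_div_cancel₀' hsa.ne', div_mul_div_cancel₀' hsa.ne',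
    ← add_assoc]
  have := congrArg (fun w => s⁻¹ • w) h
  simp only [smul_add, smul_smul] at this
  simp only [div_eq_inv_mul]
  exact this

/-- linear hull condition for a face through the origin of dimension one. -/
def OneDim {V : Type*} [AddCommGroup V] [Module ℝ V] (H : Set V) : Prop :=
  ∀ g ∈ H, g ≠ 0 → ∀ w ∈ H, ∃ t : ℝ, w = t • g

theorem face_sub {V : Type*} [AddCommGroup V] [Module ℝ V] {C H K : Set V}
    (hH : Convex ℝ H) (hE : IsExtreme ℝ C H) (hK : K ⊆ C)
    (h0 : (0 : V) ∈ H) {g : V} (hg : g ∈ H) (hgK : g ∈ K) (hg0 : g ≠ 0) (hKd : OneDim K) :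
    K ⊆ H := by
  intro w hw
  obtain ⟨t, rfl⟩ := hKd g hgK hg0 w hw
  rcases lt_trichotomy t 0 with ht | rfl | ht
  · refine hE.left_mem_of_mem_openSegment (hK hw) (hE.subset hg) h0
      ⟨1 / (1 - t), (-t) / (1 - t), ?_, ?_, ?_, ?_⟩
    · apply div_pos <;> linarith
    · apply div_pos <;> linarith
    · rw [← add_div]; apply div_eq_one_iff_eq (by linarith) |>.2; ring
    · rw [smul_smul, ← add_smul]
      have : 1 / (1 - t) * t + -t / (1 - t) = 0 := by ring
      rw [this, zero_smul]
  · simpa using h0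
  · rcases le_or_gt t 1 with h1 | h1
    · have := hH hg h0 ht.le (b := 1 - t) (by linarith) (by ring)
      simpa using this
    · refine hE.left_mem_of_mem_openSegment (hK hw) (hE.subset h0) hg
        ⟨1 / t, 1 - 1 / t, by positivity, ?_, by ring, ?_⟩
      · rw [sub_pos, div_lt_one ht]; exact h1
      · rw [smul_smul, one_div, inv_mul_cancel₀ ht.ne']; simp

theorem face_eq {V : Type*} [AddCommGroup V] [Module ℝ V] {C H K : Set V}
    (hH : Convex ℝ H) (hE : IsExtreme ℝ C H) (hK : Convex ℝ K) (hEK : IsExtreme ℝ C K)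
    (h0 : (0 : V) ∈ H) (h0K : (0 : V) ∈ K) {g : V} (hg : g ∈ H) (hgK : g ∈ K) (hg0 : g ≠ 0)
    (hHd : OneDim H) (hKd : OneDim K) : H = K :=
  Set.Subset.antisymm (face_sub hK hEK hE.subset h0K hgK hg hg0 hHd)
    (face_sub hH hE hEK.subset h0 hg hgK hg0 hKd)

/-- supporting functional along a face. -/
theorem face_support {C H : Set (Fin 3 → ℝ)} (hC : Convex ℝ C) (hint : (interior C).Nonempty)
    (hH : Convex ℝ H) (hE : IsExtreme ℝ C H) (h0 : (0 : Fin 3 → ℝ) ∈ H) {g : Fin 3 → ℝ}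
    (hg : g ∈ H) (hHC : H ≠ C) :
    ∃ u : Fin 3 → ℝ, u ≠ 0 ∧ (∀ y ∈ C, 0 ≤ dotR y u) ∧ dotR g u = 0 := by
  set m : Fin 3 → ℝ := (1 / 2 : ℝ) • g with hm
  have hmH : m ∈ H := by
    have := hH hg h0 (a := 1 / 2) (b := 1 / 2) (by norm_num) (by norm_num) (by norm_num)
    simpa [hm] using this
  have hmi : m ∉ interior C := by
    intro hi
    apply hHC
    refine Set.Subset.antisymm hE.subset fun w hw => ?_
    have hcont : Filter.Tendsto (fun e : ℝ => m + e • (m - w)) (nhds 0) (nhds m) := by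
      have : Continuous (fun e : ℝ => m + e • (m - w)) := by fun_prop
      simpa using this.tendsto 0
    have hev := hcont.eventually (isOpen_interior.mem_nhds hi)
    have hev2 : ∀ᶠ e : ℝ in nhdsWithin 0 (Set.Ioi 0), m + e • (m - w) ∈ interior C :=
      hev.filter_mono nhdsWithin_le_nhds
    obtain ⟨e, he, hpos⟩ := (hev2.and self_mem_nhdsWithin).exists
    have hpos : (0 : ℝ) < e := hpos
    refine hE.left_mem_of_mem_openSegment hw (interior_subset he) hmH
      ⟨e / (1 + e), 1 / (1 + e), by positivity, by positivity, by field_simp; ring, ?_⟩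
    ext i
    simp
    field_simp
    ring
  obtain ⟨φ, hφ⟩ := geometric_hahn_banach_open_point hC.interior isOpen_interior hmi
  obtain ⟨v, hv⟩ := dual_eq_dotR φ
  have hle : ∀ y ∈ C, φ y ≤ φ m := by
    intro y hy
    have hcl : y ∈ closure (interior C) := by
      rw [hC.closure_interior_eq_closure_of_nonempty_interior hint]
      exact subset_closure hy
    have hcl2 : closure (interior C) ⊆ {y | φ y ≤ φ m} :=
      closure_minimal (fun a ha => (hφ a ha).le) (isClosed_le φ.continuous continuous_const)
    exact hcl2 hcl
  have hgm : φ m = 1 / 2 * φ g := by rw [hm, map_smul, smul_eq_mul]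
  have h1 := hle 0 (hE.subset h0)
  have h2 := hle g (hE.subset hg)
  rw [map_zero] at h1
  have hφg : φ g = 0 := by linarith
  have hφm : φ m = 0 := by rw [hgm, hφg]; simp
  refine ⟨-v, ?_, ?_, ?_⟩
  · intro hv0
    obtain ⟨a, ha⟩ := hint
    have := hφ a ha
    have hv00 : v = 0 := neg_eq_zero.1 hv0
    rw [hv, hv, hv00, dotR_zero_right, dotR_zero_right] at this
    exact lt_irrefl _ this
  · intro y hy
    have := hle y hy
    rw [hφm, hv] at this
    have h3 : dotR y (-v) = - dotR y v := by simp [dotR]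
    rw [h3]; linarith
  · have h3 : dotR g (-v) = - dotR g v := by simp [dotR]
    rw [h3, ← hv, hφg, neg_zero]

/-- points of faces of a convex hull. -/
theorem face_hull {V : Type*} [AddCommGroup V] [Module ℝ V] {S H : Set V}
    (hE : IsExtreme ℝ (convexHull ℝ S) H) : H ⊆ convexHull ℝ (S ∩ H) := by
  have : convexHull ℝ S ⊆ {q | q ∈ convexHull ℝ S ∧ (q ∈ H → q ∈ convexHull ℝ (S ∩ H))} := by
    refine convexHull_min ?_ ?_
    · intro q hq
      exact ⟨subset_convexHull _ _ hq, fun h => subset_convexHull _ _ ⟨hq, h⟩⟩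
    · rw [convex_iff_forall_pos]
      rintro x ⟨hx, hx'⟩ y ⟨hy, hy'⟩ a b ha hb hab
      refine ⟨convex_convexHull ℝ S hx hy ha.le hb.le hab, fun h => ?_⟩
      have hseg : a • x + b • y ∈ openSegment ℝ x y := ⟨a, b, ha, hb, hab, rfl⟩
      exact convex_convexHull ℝ _ (hx' (hE.left_mem_of_mem_openSegment hx hy h hseg))
        (hy' (hE.right_mem_of_mem_openSegment hx hy h hseg)) ha.le hb.le hab
  intro q hq
  exact (this (hE.subset hq)).2 hq

/-- independence of three edge directions. -/
theorem edges_indep {V : Type*} [AddCommGroup V] [Module ℝ V] {C : Set V} (hC : Convex ℝ C)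
    (H : Fin 3 → Set V) (hH : ∀ i, Convex ℝ (H i)) (hE : ∀ i, IsExtreme ℝ C (H i))
    (h0 : ∀ i, (0 : V) ∈ H i) (g : Fin 3 → V) (hg : ∀ i, g i ∈ H i) (hg0 : ∀ i, g i ≠ 0)
    (hne : ∀ i j, i ≠ j → g i ∉ H j) (hex : IsExtreme ℝ C {(0 : V)}) :
    LinearIndependent ℝ g := by
  have hgC : ∀ i, g i ∈ C := fun i => (hE i).subset (hg i)
  -- all nonnegative
  have key1 : ∀ c : Fin 3 → ℝ, (∀ i, 0 ≤ c i) → c 0 • g 0 + c 1 • g 1 + c 2 • g 2 = 0 →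
      ∀ i, c i = 0 := by
    intro c hc h i
    by_contra hi
    have hpos : 0 < c i := lt_of_le_of_ne (hc i) (Ne.symm hi)
    apply hg0 i
    have aux : ∀ i j k : Fin 3, 0 < c i → c i • g i + c j • g j + c k • g k = 0 → g i = 0 := by
      intro i j k hi h
      have := face_cone hC (convex_singleton _) hex rfl (hgC i) (hgC j) (hgC k) rfl hi (hc j) (hc k)
        (zero_le_one) (t := 1) (by rw [h, smul_zero])
      simpa using this
    fin_cases i
    · exact aux 0 1 2 hpos h
    · exact aux 1 0 2 hpos (by rw [← h]; abel)
    · exact aux 2 0 1 hpos (by rw [← h]; abel)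
  have key2 : ∀ i j k : Fin 3, i ≠ k → j ≠ k → ∀ a b t : ℝ, 0 ≤ a → 0 ≤ b → 0 ≤ t →
      a • g i + b • g j = t • g k → a = 0 ∧ b = 0 ∧ t = 0 := by
    intro i j k hik hjk a b t ha hb ht h
    have ha0 : a = 0 := by
      by_contra hi
      have hpos : 0 < a := lt_of_le_of_ne ha (Ne.symm hi)
      exact hne i k hik (face_cone hC (hH k) (hE k) (h0 k) (hgC i) (hgC j) (hgC j) (hg k) hpos hb
        le_rfl ht (by rw [h.symm]; simp))
    have hb0 : b = 0 := by
      by_contra hi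
      have hpos : 0 < b := lt_of_le_of_ne hb (Ne.symm hi)
      exact hne j k hjk (face_cone hC (hH k) (hE k) (h0 k) (hgC j) (hgC i) (hgC i) (hg k) hpos ha
        le_rfl ht (by rw [h.symm, add_comm (a • g i)]; simp))
    refine ⟨ha0, hb0, ?_⟩
    rw [ha0, hb0] at h
    simp only [zero_smul, add_zero] at h
    exact (smul_eq_zero.1 h.symm).resolve_right (hg0 k)
  -- two signs
  have key3 : ∀ c : Fin 3 → ℝ, c 0 • g 0 + c 1 • g 1 + c 2 • g 2 = 0 → 0 ≤ c 0 → ∀ i, c i = 0 := by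
    intro c h hc0
    rcases le_total 0 (c 1) with h1 | h1 <;> rcases le_total 0 (c 2) with h2 | h2
    · refine key1 c ?_ h
      intro i; fin_cases i <;> assumption
    · obtain ⟨a, b, t⟩ := key2 0 1 2 (by decide) (by decide) (c 0) (c 1) (-c 2) hc0 h1 (by linarith)
        (by rw [neg_smul, eq_neg_iff_add_eq_zero]; exact h)
      intro i; fin_cases i
      · exact a
      · exact b
      · exact neg_eq_zero.1 t
    · obtain ⟨a, b, t⟩ := key2 0 2 1 (by decide) (by decide) (c 0) (c 2) (-c 1) hc0 h2 (by linarith)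
        (by rw [neg_smul, eq_neg_iff_add_eq_zero, ← h]; abel)
      intro i; fin_cases i
      · exact a
      · exact neg_eq_zero.1 t
      · exact b
    · obtain ⟨a, b, t⟩ := key2 1 2 0 (by decide) (by decide) (-c 1) (-c 2) (c 0) (by linarith)
        (by linarith) hc0
        (by rw [neg_smul, neg_smul, ← sub_eq_zero, ← neg_eq_zero, ← h]; abel)
      intro i; fin_cases i
      · exact t
      · exact neg_eq_zero.1 a
      · exact neg_eq_zero.1 b
  rw [Fintype.linearIndependent_iff]
  intro c h
  rw [Fin.sum_univ_three] at h
  rcases le_total 0 (c 0) with hc | hc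
  · exact key3 c h hc
  · intro i
    have := key3 (-c) (by simp only [Pi.neg_apply, neg_smul]; rw [← neg_eq_zero, ← h]; abel)
      (by simpa using hc) i
    simpa using this

end Abstract

theorem isCompact_hull3 {S : Set (Fin 3 → ℝ)} (hS : IsCompact S) :
    IsCompact (convexHull ℝ S) := by
  rcases S.eq_empty_or_nonempty with rfl | ⟨s0, hs0⟩
  · simp
  have hK : IsCompact (stdSimplex ℝ (Fin 4) ×ˢ
      (Set.univ.pi fun _ : Fin 4 => S)) :=
    (isCompact_stdSimplex ℝ (Fin 4)).prod (isCompact_univ_pi fun _ => hS)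
  have hf : Continuous (fun q : (Fin 4 → ℝ) × (Fin 4 → Fin 3 → ℝ) => ∑ i, q.1 i • q.2 i) := by
    fun_prop
  have himg := hK.image hf
  convert himg using 1
  refine Set.Subset.antisymm ?_ ?_
  · intro x hx
    obtain ⟨ι, _, z, w, hz, hai, hw, hw1, hx⟩ := eq_pos_convex_span_of_mem_convexHull hx
    have hcard : Fintype.card ι ≤ Fintype.card (Fin 4) := by
      have h1 := hai.card_le_finrank_succ
      have h2 := Submodule.finrank_le (vectorSpan ℝ (Set.range z))
      simp at h1 h2 ⊢
      omega
    obtain ⟨e⟩ := Function.Embedding.nonempty_of_card_le hcard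
    classical
    refine ⟨(fun i => ∑ k with e k = i, w k, Function.extend e z fun _ => s0), ⟨⟨?_, ?_⟩, ?_⟩, ?_⟩
    · intro i
      exact Finset.sum_nonneg fun k _ => (hw k).le
    · rw [← hw1]
      exact Finset.sum_fiberwise Finset.univ e w
    · intro i _
      by_cases hi : ∃ k, e k = i
      · obtain ⟨k, rfl⟩ := hi
        simp only [e.injective.extend_apply]
        exact hz ⟨k, rfl⟩
      · simp only [Function.extend_apply' _ _ _ hi]
        exact hs0
    · rw [← hx, ← Finset.sum_fiberwise Finset.univ e]
      refine Finset.sum_congr rfl fun i _ => ?_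
      simp only [Finset.sum_smul]
      refine Finset.sum_congr rfl fun k hk => ?_
      have hk' : e k = i := by simpa using hk
      rw [← hk', e.injective.extend_apply]
  · rintro _ ⟨⟨w, z⟩, ⟨⟨hw0, hw1⟩, hz⟩, rfl⟩
    exact (convex_convexHull ℝ S).sum_mem (fun i _ => hw0 i) hw1
      fun i _ => subset_convexHull _ _ (hz i trivial)

section Hilb

variable {E : Type*} [NormedAddCommGroup E] [InnerProductSpace ℂ E]

/-- the vector of quadratic forms. -/
def QF (T : Fin 3 → E →ₗ[ℂ] E) (v : E) : Fin 3 → ℝ := fun j => (inner ℂ v (T j v)).re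

/-- the joint numerical range of operators. -/
def CC (T : Fin 3 → E →ₗ[ℂ] E) : Set (Fin 3 → ℝ) := convexHull ℝ (QF T '' Metric.sphere 0 1)

theorem QF_smul (T : Fin 3 → E →ₗ[ℂ] E) (c : ℂ) (v : E) : QF T (c • v) = (‖c‖ ^ 2) • QF T v := by
  ext j
  simp only [QF, map_smul, inner_smul_left, inner_smul_right, Pi.smul_apply, smul_eq_mul]
  rw [← mul_assoc, Complex.mul_conj']
  rw [← Complex.ofReal_pow, Complex.re_ofReal_mul]

theorem QF_par (T : Fin 3 → E →ₗ[ℂ] E) (v w : E) :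
    QF T (v + w) + QF T (v - w) = (2 : ℝ) • QF T v + (2 : ℝ) • QF T w := by
  ext j
  simp only [QF, map_add, map_sub, inner_add_left, inner_add_right, inner_sub_left, inner_sub_right,
    Pi.add_apply, Pi.smul_apply, smul_eq_mul, Complex.add_re, Complex.sub_re]
  ring

theorem QF_add (T : Fin 3 → E →ₗ[ℂ] E) (hT : ∀ j, (T j).IsSymmetric) (v w : E) :
    QF T (v + w) = QF T v + QF T w + (2 : ℝ) • (fun j => (inner ℂ v (T j w)).re) := by
  ext j
  have h : (inner ℂ w (T j v)).re = (inner ℂ v (T j w)).re := by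
    rw [← hT j w v, ← inner_conj_symm, Complex.conj_re]
  simp only [QF, map_add, inner_add_left, inner_add_right,
    Pi.add_apply, Pi.smul_apply, smul_eq_mul, Complex.add_re]
  rw [h]
  ring

theorem QF_zero (T : Fin 3 → E →ₗ[ℂ] E) : QF T 0 = 0 := by
  ext j; simp [QF]

theorem QF_normalize (T : Fin 3 → E →ₗ[ℂ] E) (v : E) (hv : v ≠ 0) :
    QF T v = (‖v‖ ^ 2) • QF T (((‖v‖⁻¹ : ℝ) : ℂ) • v) := by
  rw [QF_smul, smul_smul]
  have : ‖v‖ ≠ 0 := norm_ne_zero_iff.2 hv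
  simp only [Complex.norm_real, norm_inv, norm_norm]
  rw [← mul_pow, mul_inv_cancel₀ this]; simp

theorem norm_normalize (v : E) (hv : v ≠ 0) : ‖((‖v‖⁻¹ : ℝ) : ℂ) • v‖ = 1 := by
  have : ‖v‖ ≠ 0 := norm_ne_zero_iff.2 hv
  rw [norm_smul, Complex.norm_real, norm_inv, norm_norm, inv_mul_cancel₀ this]

theorem QF_cone (T : Fin 3 → E →ₗ[ℂ] E) (h0 : (0 : Fin 3 → ℝ) ∈ CC T) (v : E) :
    ∃ c ∈ CC T, QF T v = (‖v‖ ^ 2) • c := by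
  by_cases hv : v = 0
  · exact ⟨0, h0, by rw [hv, QF_zero]; simp⟩
  · refine ⟨QF T (((‖v‖⁻¹ : ℝ) : ℂ) • v), ?_, QF_normalize T v hv⟩
    exact subset_convexHull _ _ ⟨_, mem_sphere_zero_iff_norm.2 (norm_normalize v hv), rfl⟩

theorem QF_face (T : Fin 3 → E →ₗ[ℂ] E) {H : Set (Fin 3 → ℝ)} (hH : Convex ℝ H)
    (hE : IsExtreme ℝ (CC T) H) (h0 : (0 : Fin 3 → ℝ) ∈ H) (hd : OneDim H)
    (hex : IsExtreme ℝ (CC T) {(0 : Fin 3 → ℝ)}) {g : Fin 3 → ℝ} (hg : g ∈ H) (hg0 : g ≠ 0)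
    {v w : E} {t : ℝ} (ht : 0 ≤ t) (h : QF T v + QF T w = t • g) :
    ∃ s : ℝ, 0 ≤ s ∧ QF T v = s • g := by
  have hC : Convex ℝ (CC T) := convex_convexHull _ _
  by_cases hv : v = 0
  · exact ⟨0, le_rfl, by rw [hv, QF_zero]; simp⟩
  obtain ⟨c, hc, hvc⟩ := QF_cone T (hE.subset h0) v
  obtain ⟨d, hdC, hwd⟩ := QF_cone T (hE.subset h0) w
  have hvp : 0 < ‖v‖ ^ 2 := by have := norm_pos_iff.2 hv; positivity
  have hcH : c ∈ H := face_cone hC hH hE h0 hc hdC hdC hg hvp (b := ‖w‖ ^ 2) (c := 0)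
    (by positivity) le_rfl ht (by rw [← h, hvc, hwd]; simp)
  obtain ⟨s, hs⟩ := hd g hg hg0 c hcH
  have hs0 : 0 ≤ s := by
    by_contra hneg
    push Not at hneg
    apply hg0
    have hgC := hE.subset hg
    have := face_cone hC (convex_singleton _) hex rfl hgC hc hc rfl (a := -s) (b := 1) (c := 0)
      (t := 0) (by linarith) zero_le_one le_rfl le_rfl (by rw [hs]; simp)
    simpa using this
  exact ⟨‖v‖ ^ 2 * s, by positivity, by rw [hvc, hs, smul_smul]⟩

theorem QF_polar (T : Fin 3 → E →ₗ[ℂ] E) (hT : ∀ j, (T j).IsSymmetric) {H : Set (Fin 3 → ℝ)}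
    (hH : Convex ℝ H)
    (hE : IsExtreme ℝ (CC T) H) (h0 : (0 : Fin 3 → ℝ) ∈ H) (hd : OneDim H)
    (hex : IsExtreme ℝ (CC T) {(0 : Fin 3 → ℝ)}) {x y : E} (hg : QF T y ∈ H) (hg0 : QF T y ≠ 0)
    (hx : QF T x = 0) (j : Fin 3) : inner ℂ x (T j y) = 0 := by
  have key : ∀ c : ℂ, ∃ s : ℝ, 0 ≤ s ∧ QF T (x + c • y) = s • QF T y := by
    intro c
    refine QF_face T hH hE h0 hd hex hg hg0 (w := x - c • y) (t := 2 * ‖c‖ ^ 2) (by positivity) ?_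
    rw [QF_par, hx, QF_smul, smul_smul]; simp
  have key2 : ∀ c : ℂ, ‖c‖ = 1 → ∀ j, (c * inner ℂ x (T j y)).re = 0 := by
    intro c hc
    have hexp : ∀ t : ℝ, QF T (x + ((t : ℂ) * c) • y) = t ^ 2 • QF T y +
        (2 * t) • (fun j => (c * inner ℂ x (T j y)).re) := by
      intro t
      rw [QF_add T hT, hx, QF_smul, norm_mul, hc, Complex.norm_real, zero_add, mul_one,
        Real.norm_eq_abs, sq_abs, mul_smul (2 : ℝ) t]
      congr 2
      funext j
      simp only [map_smul, inner_smul_right, Pi.smul_apply, smul_eq_mul]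
      rw [mul_assoc, Complex.re_ofReal_mul]
    obtain ⟨s, -, hs⟩ := key ((1 : ℝ) * c)
    rw [hexp] at hs
    have hr : (fun j => (c * inner ℂ x (T j y)).re) = ((s - 1) / 2) • QF T y := by
      have h2 : (2 : ℝ) • (fun j => (c * inner ℂ x (T j y)).re) = (s - 1) • QF T y := by
        rw [sub_smul, ← hs]; simp
      rw [div_eq_inv_mul, mul_smul, ← h2, smul_smul]; simp
    set σ := (s - 1) / 2
    obtain ⟨s', hs', hss⟩ := key (((-σ : ℝ) : ℂ) * c)
    rw [hexp, hr, smul_smul, ← add_smul] at hss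
    have heq : (-σ) ^ 2 + 2 * -σ * σ = s' := smul_left_injective ℝ hg0 hss
    have hσ : σ = 0 := by nlinarith
    intro j
    have := congrFun hr j
    rw [hσ] at this
    simpa using this
  have h1 := key2 1 (by simp) j
  have h2 := key2 Complex.I (by simp) j
  simp at h1 h2
  exact Complex.ext h1 h2

theorem kernel_of_dep [FiniteDimensional ℂ E] (hfin : Module.finrank ℂ E = 4)
    (T : Fin 3 → E →ₗ[ℂ] E) (hT : ∀ j, (T j).IsSymmetric)
    {x y₁ y₂ y₃ : E} (hx : QF T x = 0)
    (h1 : ∀ j, inner ℂ x (T j y₁) = 0) (h2 : ∀ j, inner ℂ x (T j y₂) = 0)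
    (h3 : ∀ j, inner ℂ x (T j y₃) = 0)
    (hind : LinearIndependent ℝ ![QF T y₁, QF T y₂])
    {u : Fin 3 → ℝ} (hu : ∀ v, 0 ≤ dotR (QF T v) u) (hu1 : dotR (QF T y₁) u = 0)
    (hu2 : dotR (QF T y₂) u = 0) (hu3 : dotR (QF T y₃) u ≠ 0) (j : Fin 3) : T j x = 0 := by
  by_cases hx0 : x = 0
  · rw [hx0, map_zero]
  have hsm : ∀ (c : ℂ) v, dotR (QF T v) u = 0 → dotR (QF T (c • v)) u = 0 := by
    intro c v hv
    rw [QF_smul, dotR_smul_left, hv, mul_zero]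
  have hadd : ∀ v w, dotR (QF T v) u = 0 → dotR (QF T w) u = 0 → dotR (QF T (v + w)) u = 0 := by
    intro v w hv hw
    have := congrArg (fun z => dotR z u) (QF_par T v w)
    simp only [dotR_add_left, dotR_smul_left, hv, hw] at this
    have ha := hu (v + w)
    have hb := hu (v - w)
    linarith
  have hux : dotR (QF T x) u = 0 := by rw [hx, dotR_zero_left]
  have hli : LinearIndependent ℂ ![x, y₁, y₂, y₃] := by
    rw [Fintype.linearIndependent_iff]
    intro c hc
    simp only [Fin.sum_univ_four] at hc
    simp at hc
    have hc3 : c 3 = 0 := by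
      have he : (c 3) • y₃ = (-c 0) • x + (-c 1) • y₁ + (-c 2) • y₂ := by
        rw [← sub_eq_zero, ← hc]; simp only [neg_smul]; abel
      have hz := hadd _ _ (hadd _ _ (hsm (-c 0) _ hux) (hsm (-c 1) _ hu1)) (hsm (-c 2) _ hu2)
      rw [← he, QF_smul, dotR_smul_left] at hz
      simpa [hu3] using hz
    rw [hc3, zero_smul, add_zero] at hc
    have he : c 0 • x + c 1 • y₁ = (-c 2) • y₂ := by
      rw [← sub_eq_zero, ← hc]; simp only [neg_smul]; abel
    have hq := congrArg (QF T) he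
    rw [QF_add T hT, QF_smul, QF_smul, QF_smul, hx] at hq
    have hz : (fun j => (inner ℂ (c 0 • x) (T j (c 1 • y₁))).re) = 0 := by
      ext j
      simp [h1 j]
    rw [hz] at hq
    have hpair := LinearIndependent.pair_iff.1 hind (‖c 1‖ ^ 2) (-‖-c 2‖ ^ 2) (by
      rw [neg_smul, ← hq]; simp)
    have hc1 : c 1 = 0 := by simpa using hpair.1
    have hc2 : c 2 = 0 := by simpa using hpair.2
    rw [hc1, hc2] at hc
    have hc0 : c 0 = 0 := by simpa [hx0] using hc
    intro i
    fin_cases i <;> assumption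
  have hspan := hli.span_eq_top_of_card_eq_finrank' (by simp [hfin])
  have hall : ∀ v ∈ Submodule.span ℂ (Set.range ![x, y₁, y₂, y₃]), inner ℂ v (T j x) = 0 := by
    intro v hv
    have hsym : ∀ y, inner ℂ x (T j y) = 0 → inner ℂ y (T j x) = 0 := by
      intro y hy
      rw [← hT j y x, ← inner_conj_symm, hy, map_zero]
    have hxx : inner ℂ x (T j x) = 0 := by
      have hre : (inner ℂ x (T j x)).re = 0 := congrFun hx j
      have him : (starRingEnd ℂ) (inner ℂ x (T j x)) = inner ℂ x (T j x) := by
        rw [inner_conj_symm, hT j x x]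
      exact Complex.ext hre (Complex.conj_eq_iff_im.1 him)
    induction hv using Submodule.span_induction with
    | mem z hz =>
      obtain ⟨i, rfl⟩ := hz
      fin_cases i
      · exact hxx
      · exact hsym _ (h1 j)
      · exact hsym _ (h2 j)
      · exact hsym _ (h3 j)
    | zero => simp
    | add a b _ _ ha hb => rw [inner_add_left, ha, hb, add_zero]
    | smul c a _ ha => rw [inner_smul_left, ha, mul_zero]
  have := hall (T j x) (by rw [hspan]; trivial)
  exact inner_self_eq_zero.1 this

theorem corner_of_kernel [FiniteDimensional ℂ E]
    (T : Fin 3 → E →ₗ[ℂ] E) (hT : ∀ j, (T j).IsSymmetric)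
    (hex : IsExtreme ℝ (CC T) {(0 : Fin 3 → ℝ)})
    (hker : ∀ x, QF T x = 0 → ∀ j, T j x = 0) :
    Submodule.span ℝ {u : Fin 3 → ℝ | ∀ y ∈ CC T, 0 ≤ dotR y u} = ⊤ := by
  set K : Submodule ℂ E := ⨅ j, LinearMap.ker (T j) with hK
  have hmemK : ∀ x, x ∈ K ↔ ∀ j, T j x = 0 := by
    intro x; simp [hK, Submodule.mem_iInf]
  set S : Set E := (Kᗮ : Set E) ∩ Metric.sphere 0 1 with hS
  have hcpt : IsCompact S := by
    have : ProperSpace E := FiniteDimensional.proper_rclike ℂ E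
    exact (isCompact_sphere (0 : E) 1).inter_left (Submodule.isClosed_orthogonal K)
  have hcont : Continuous (QF T) := by
    refine continuous_pi fun j => ?_
    have : Continuous (T j) := (T j).continuous_of_finiteDimensional
    unfold QF
    fun_prop
  have hQS : IsCompact (QF T '' S) := hcpt.image hcont
  have hsub : convexHull ℝ (QF T '' S) ⊆ CC T :=
    convexHull_mono (Set.image_mono Set.inter_subset_right)
  have h0 : (0 : Fin 3 → ℝ) ∉ convexHull ℝ (QF T '' S) := by
    intro h
    have h1 : (0 : Fin 3 → ℝ) ∈ (convexHull ℝ (QF T '' S)).extremePoints ℝ :=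
      inter_extremePoints_subset_extremePoints_of_subset hsub ⟨h, isExtreme_singleton.1 hex⟩
    obtain ⟨y, ⟨hyK, hy1⟩, hy⟩ := extremePoints_convexHull_subset h1
    have hyk : y ∈ K := (hmemK y).2 (hker y hy)
    have : y = 0 := by
      have := (Submodule.mem_orthogonal K y).1 hyK y hyk
      exact inner_self_eq_zero.1 this
    rw [this] at hy1
    simp at hy1
  obtain ⟨φ, s, hs0, hs⟩ := geometric_hahn_banach_point_closed (convex_convexHull ℝ (QF T '' S))
    (isCompact_hull3 hQS).isClosed h0
  rw [map_zero] at hs0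
  obtain ⟨u, hu⟩ := dual_eq_dotR φ
  obtain ⟨M, hM⟩ := hQS.isBounded.exists_norm_le
  have hM0 : 0 < |M| + 1 := by positivity
  have key : ∀ w : Fin 3 → ℝ, (∀ b ∈ QF T '' S, 0 ≤ dotR b w) → ∀ y ∈ CC T, 0 ≤ dotR y w := by
    intro w hw
    have hconv : Convex ℝ {y : Fin 3 → ℝ | 0 ≤ dotR y w} := by
      intro a ha b hb s t hs ht _
      simp only [Set.mem_ofPred_eq] at *
      rw [dotR_add_left, dotR_smul_left, dotR_smul_left]
      positivity
    refine convexHull_min ?_ hconv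
    rintro _ ⟨v, -, rfl⟩
    obtain ⟨a, ha, b, hb, rfl⟩ := K.exists_add_mem_mem_orthogonal v
    have hQ : QF T (a + b) = QF T b := by
      have ha' := (hmemK a).1 ha
      ext j
      simp only [QF, map_add, ha' j, zero_add, inner_add_left]
      rw [← hT j a b, ha' j]; simp
    show 0 ≤ dotR (QF T (a + b)) w
    rw [hQ]
    by_cases hb0 : b = 0
    · rw [hb0, QF_zero, dotR_zero_left]
    · rw [QF_normalize T b hb0, dotR_smul_left]
      refine mul_nonneg (by positivity) (hw _ ⟨_, ⟨Kᗮ.smul_mem _ hb, ?_⟩, rfl⟩)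
      rw [mem_sphere_zero_iff_norm]; exact norm_normalize b hb0
  have hub : ∀ b ∈ QF T '' S, s ≤ dotR b u := by
    intro b hb
    rw [← hu]; exact (hs b (subset_convexHull _ _ hb)).le
  have huN : u ∈ {u : Fin 3 → ℝ | ∀ y ∈ CC T, 0 ≤ dotR y u} :=
    key u fun b hb => hs0.le.trans (hub b hb)
  have hek : ∀ k : Fin 3, (Pi.single k 1 : Fin 3 → ℝ) ∈
      Submodule.span ℝ {u : Fin 3 → ℝ | ∀ y ∈ CC T, 0 ≤ dotR y u} := by
    intro k
    set e := s / (|M| + 1) with he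
    have he0 : 0 < e := by positivity
    have hN : u + e • Pi.single k 1 ∈ {u : Fin 3 → ℝ | ∀ y ∈ CC T, 0 ≤ dotR y u} := by
      refine key _ fun b hb => ?_
      rw [dotR_add_right, dotR_smul_right]
      have h1 : dotR b (Pi.single k 1) = b k := by
        simp [dotR, Pi.single_apply]
      rw [h1]
      have h2 : |b k| ≤ M := (norm_le_pi_norm b k).trans (hM b hb)
      have h3 : -(|M| + 1) ≤ b k := by
        have := neg_abs_le (b k)
        have := le_abs_self M
        linarith
      have h4 : e * -(|M| + 1) ≤ e * b k := mul_le_mul_of_nonneg_left h3 he0.le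
      have h5 : e * -(|M| + 1) = -s := by rw [he]; field_simp
      have := hub b hb
      linarith
    have h6 := Submodule.sub_mem (Submodule.span ℝ {u : Fin 3 → ℝ | ∀ y ∈ CC T, 0 ≤ dotR y u})
      (Submodule.subset_span hN) (Submodule.subset_span huN)
    have h7 := Submodule.smul_mem _ e⁻¹ h6
    rwa [add_sub_cancel_left, smul_smul, inv_mul_cancel₀ he0.ne', one_smul] at h7
  rw [eq_top_iff]
  intro w _
  have : w = ∑ k, w k • (Pi.single k 1 : Fin 3 → ℝ) := by
    ext i; simp [Finset.sum_apply, Pi.single_apply]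
  rw [this]
  exact Submodule.sum_mem _ fun k _ => Submodule.smul_mem _ _ (hek k)

theorem main_abstract [FiniteDimensional ℂ E] (hfin : Module.finrank ℂ E = 4)
    (T : Fin 3 → E →ₗ[ℂ] E) (hT : ∀ j, (T j).IsSymmetric) (hint : (interior (CC T)).Nonempty)
    (H : Fin 3 → Set (Fin 3 → ℝ)) (hH : ∀ i, Convex ℝ (H i)) (hE : ∀ i, IsExtreme ℝ (CC T) (H i))
    (h0 : ∀ i, (0 : Fin 3 → ℝ) ∈ H i) (hd : ∀ i, OneDim (H i)) (hn : ∀ i, ∃ g ∈ H i, g ≠ 0)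
    (hne : ∀ i j, i ≠ j → H i ≠ H j) :
    H 0 ∩ H 1 ∩ H 2 = {0} ∧
      Submodule.span ℝ {u : Fin 3 → ℝ | ∀ y ∈ CC T, 0 ≤ dotR y u} = ⊤ := by
  have hC : Convex ℝ (CC T) := convex_convexHull _ _
  have hnm : ∀ i j, i ≠ j → ∀ g ∈ H i, g ≠ 0 → g ∉ H j := by
    intro i j hij g hg hg0 hgj
    exact hne i j hij (face_eq (hH i) (hE i) (hH j) (hE j) (h0 i) (h0 j) hg hgj hg0 (hd i) (hd j))
  have hsing : H 0 ∩ H 1 ∩ H 2 = {0} := by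
    refine Set.Subset.antisymm ?_ ?_
    · rintro g ⟨⟨hg0, hg1⟩, -⟩
      by_contra hg
      exact hnm 0 1 (by decide) g hg0 hg hg1
    · rintro _ rfl
      exact ⟨⟨h0 0, h0 1⟩, h0 2⟩
  refine ⟨hsing, ?_⟩
  have hex : IsExtreme ℝ (CC T) {(0 : Fin 3 → ℝ)} := by
    rw [← hsing]; exact ((hE 0).inter (hE 1)).inter (hE 2)
  -- pure states
  have hpure : ∀ i, ∃ y : E, QF T y ∈ H i ∧ QF T y ≠ 0 := by
    intro i
    by_contra hcon
    push Not at hcon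
    obtain ⟨g, hg, hg0⟩ := hn i
    apply hg0
    have h1 := face_hull (hE i) hg
    have h2 : convexHull ℝ (QF T '' Metric.sphere 0 1 ∩ H i) ⊆ {0} := by
      refine convexHull_min ?_ (convex_singleton _)
      rintro _ ⟨⟨y, -, rfl⟩, hy⟩
      exact hcon y hy
    exact h2 h1
  choose y hyH hy0 using hpure
  have hgind : LinearIndependent ℝ (fun i => QF T (y i)) :=
    edges_indep hC H hH hE h0 _ hyH hy0 (fun i j hij => hnm i j hij _ (hyH i) (hy0 i)) hex
  have hHC : ∀ i, H i ≠ CC T := by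
    intro i hi
    have : ∃ j, j ≠ i := ⟨i + 1, by fin_cases i <;> decide⟩
    obtain ⟨j, hj⟩ := this
    exact hnm j i hj _ (hyH j) (hy0 j) (by rw [hi]; exact (hE j).subset (hyH j))
  have hsup := fun i => face_support hC hint (hH i) (hE i) (h0 i) (hyH i) (hHC i)
  choose u hu0 huN hug using hsup
  have hyC : ∀ i, QF T (y i) ∈ CC T := fun i => (hE i).subset (hyH i)
  by_cases huind : LinearIndependent ℝ u
  · have h1 := huind.span_eq_top_of_card_eq_finrank' (by simp)
    rw [eq_top_iff, ← h1]
    refine Submodule.span_mono ?_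
    rintro _ ⟨i, rfl⟩
    exact huN i
  · apply corner_of_kernel T hT hex
    -- find i ≠ j
    have hij : ∃ i j, i ≠ j ∧ dotR (QF T (y j)) (u i) = 0 := by
      by_contra hcon
      push Not at hcon
      apply huind
      have hpos : ∀ i j, i ≠ j → 0 < dotR (QF T (y j)) (u i) := fun i j hij =>
        lt_of_le_of_ne (huN i _ (hyC j)) (Ne.symm (hcon i j hij))
      rw [Fintype.linearIndependent_iff]
      intro c hc
      rw [Fin.sum_univ_three] at hc
      have hdot : ∀ j, c 0 * dotR (QF T (y j)) (u 0) + c 1 * dotR (QF T (y j)) (u 1) +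
          c 2 * dotR (QF T (y j)) (u 2) = 0 := by
        intro j
        have := congrArg (fun z => dotR (QF T (y j)) z) hc
        simpa only [dotR_add_right, dotR_smul_right, dotR_zero_right] using this
      have e0 := hdot 0
      have e1 := hdot 1
      have e2 := hdot 2
      rw [hug] at e0 e1 e2
      have p01 := hpos 0 1 (by decide)
      have p02 := hpos 0 2 (by decide)
      have p10 := hpos 1 0 (by decide)
      have p12 := hpos 1 2 (by decide)
      have p20 := hpos 2 0 (by decide)
      have p21 := hpos 2 1 (by decide)
      have aux : ∀ a b p q : ℝ, 0 < p → 0 < q → a * p + b * q = 0 → (0 < a → b < 0) ∧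
          (a < 0 → 0 < b) ∧ (a = 0 → b = 0) := by
        intro a b p q hp hq h
        refine ⟨fun ha => ?_, fun ha => ?_, fun ha => ?_⟩
        · by_contra hb
          push Not at hb
          nlinarith [mul_pos ha hp, mul_nonneg hb hq.le]
        · by_contra hb
          push Not at hb
          nlinarith [mul_pos_of_neg_of_neg ha (neg_lt_zero.2 hp), mul_nonneg (neg_nonneg.2 hb) hq.le]
        · rw [ha, zero_mul, zero_add] at h
          exact (mul_eq_zero.1 h).resolve_right hq.ne'
      obtain ⟨a1, a2, a3⟩ := aux (c 1) (c 2) _ _ p10 p20 (by linarith)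
      obtain ⟨b1, b2, b3⟩ := aux (c 0) (c 2) _ _ p01 p21 (by linarith)
      obtain ⟨d1, d2, d3⟩ := aux (c 0) (c 1) _ _ p02 p12 (by linarith)
      have c0 : c 0 = 0 := by
        rcases lt_trichotomy (c 0) 0 with h | h | h
        · have := a1 (d2 h); have := b2 h; linarith
        · exact h
        · have := a2 (d1 h); have := b1 h; linarith
      intro i
      fin_cases i
      · exact c0
      · exact d3 c0
      · exact b3 c0
    obtain ⟨i, j, hij, hzero⟩ := hij
    obtain ⟨k, hki, hkj⟩ : ∃ k : Fin 3, k ≠ i ∧ k ≠ j := by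
      have : ∀ i j : Fin 3, ∃ k : Fin 3, k ≠ i ∧ k ≠ j := by decide
      exact this i j
    have hk : dotR (QF T (y k)) (u i) ≠ 0 := by
      intro hk
      apply hu0 i
      have hspan := hgind.span_eq_top_of_card_eq_finrank' (by simp)
      have hall : ∀ v ∈ Submodule.span ℝ (Set.range fun i => QF T (y i)), dotR v (u i) = 0 := by
        intro v hv
        induction hv using Submodule.span_induction with
        | mem z hz =>
          obtain ⟨l, rfl⟩ := hz
          have : l = i ∨ l = j ∨ l = k := by
            have : ∀ i j k l : Fin 3, i ≠ j → k ≠ i → k ≠ j → l = i ∨ l = j ∨ l = k := by decide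
            exact this i j k l hij hki hkj
          rcases this with rfl | rfl | rfl
          · exact hug _
          · exact hzero
          · exact hk
        | zero => exact dotR_zero_left _
        | add a b _ _ ha hb => rw [dotR_add_left, ha, hb, add_zero]
        | smul c a _ ha => rw [dotR_smul_left, ha, mul_zero]
      ext l
      have := hall (Pi.single l 1) (by rw [hspan]; trivial)
      simpa [dotR, Pi.single_apply] using this
    intro x hx l
    have hpol := fun i l => QF_polar T hT (hH i) (hE i) (h0 i) (hd i) hex (hyH i) (hy0 i) hx l
    refine kernel_of_dep hfin T hT hx (hpol i) (hpol j) (hpol k) ?_ (u := u i) ?_ (hug i) hzero hk l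
    · have h2 : Function.Injective ![i, j] := by
        intro a b hab
        fin_cases a <;> fin_cases b <;> simp_all
      have h3 := hgind.comp _ h2
      convert h3 using 1
      ext a b
      fin_cases a <;> rfl
    · intro v
      obtain ⟨c, hc, hvc⟩ := QF_cone T ((hE 0).subset (h0 0)) v
      rw [hvc, dotR_smul_left]
      exact mul_nonneg (by positivity) (huN i c hc)

end Hilb

section Transfer

/-- shifted operators. -/
def shiftOp (A : Fin 3 → Matrix (Fin 4) (Fin 4) ℂ) (p : Fin 3 → ℝ) (j : Fin 3) :
    EuclideanSpace ℂ (Fin 4) →ₗ[ℂ] EuclideanSpace ℂ (Fin 4) :=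
  Matrix.toEuclideanLin (A j - ((p j : ℝ) : ℂ) • (1 : Matrix (Fin 4) (Fin 4) ℂ))

theorem shiftOp_symm (A : Fin 3 → Matrix (Fin 4) (Fin 4) ℂ) (hA : ∀ i, (A i).IsHermitian)
    (p : Fin 3 → ℝ) (j : Fin 3) : (shiftOp A p j).IsSymmetric := by
  refine Matrix.isSymmetric_toEuclideanLin_iff.2 ?_
  refine (hA j).sub ?_
  unfold Matrix.IsHermitian
  rw [Matrix.conjTranspose_smul, Matrix.conjTranspose_one]
  simp

theorem trace_shift (A : Fin 3 → Matrix (Fin 4) (Fin 4) ℂ) (p : Fin 3 → ℝ)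
    (ρ : Matrix (Fin 4) (Fin 4) ℂ) (hρ : ρ.trace = 1) (j : Fin 3) :
    ((ρ * (A j - ((p j : ℝ) : ℂ) • (1 : Matrix (Fin 4) (Fin 4) ℂ))).trace).re
      = wpt A ρ j - p j := by
  rw [Matrix.mul_sub, Matrix.trace_sub, Matrix.mul_smul, Matrix.trace_smul, Matrix.mul_one, hρ]
  simp [wpt]

theorem trace_spec (ρ M : Matrix (Fin 4) (Fin 4) ℂ) (h : ρ.IsHermitian) :
    (ρ * M).trace = ∑ i, ((h.eigenvalues i : ℝ) : ℂ) *
      inner ℂ (h.eigenvectorBasis i) (Matrix.toEuclideanLin M (h.eigenvectorBasis i)) := by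
  have h1 : LinearMap.trace ℂ _ (Matrix.toEuclideanLin (M * ρ)) = (M * ρ).trace := by
    rw [LinearMap.trace_eq_matrix_trace ℂ (PiLp.basisFun 2 ℂ (Fin 4)),
      Matrix.toEuclideanLin_eq_toLin, LinearMap.toMatrix_toLin]
  rw [Matrix.trace_mul_comm, ← h1, LinearMap.trace_eq_sum_inner _ h.eigenvectorBasis]
  refine Finset.sum_congr rfl fun i _ => ?_
  rw [← inner_smul_right, ← map_smul]
  congr 1
  rw [Matrix.toEuclideanLin_apply, Matrix.toEuclideanLin_apply, ← Matrix.mulVec_mulVec,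
    h.mulVec_eigenvectorBasis]
  congr 1

theorem CC_shift (A : Fin 3 → Matrix (Fin 4) (Fin 4) ℂ) (p : Fin 3 → ℝ) :
    CC (shiftOp A p) = {y | y + p ∈ JNR A} := by
  refine Set.Subset.antisymm ?_ ?_
  · refine convexHull_min ?_ ?_
    · rintro _ ⟨v, hv, rfl⟩
      have hv1 : ‖v‖ = 1 := mem_sphere_zero_iff_norm.1 hv
      have htr : (Matrix.vecMulVec v.ofLp (star v.ofLp)).trace = 1 := by
        rw [Matrix.trace_vecMulVec]
        have := inner_self_eq_norm_sq_to_K (𝕜 := ℂ) v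
        rw [hv1, EuclideanSpace.inner_eq_star_dotProduct] at this
        simpa using this
      refine ⟨Matrix.vecMulVec v.ofLp (star v.ofLp), ⟨Matrix.posSemidef_vecMulVec_self_star _, htr⟩, ?_⟩
      ext j
      have := trace_shift A p _ htr j
      rw [Pi.add_apply, ← sub_eq_iff_eq_add, ← this]
      unfold QF shiftOp
      rw [EuclideanSpace.inner_eq_star_dotProduct, Matrix.toEuclideanLin_apply,
        Matrix.trace_mul_comm, Matrix.mul_vecMulVec, Matrix.trace_vecMulVec]
    · rintro x ⟨ρ, ⟨hρ, hρ1⟩, hx⟩ y ⟨τ, ⟨hτ, hτ1⟩, hy⟩ a b ha hb hab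
      refine ⟨(a : ℂ) • ρ + (b : ℂ) • τ, ⟨(hρ.smul (by simpa using ha)).add
        (hτ.smul (by simpa using hb)), ?_⟩, ?_⟩
      · rw [Matrix.trace_add, Matrix.trace_smul, Matrix.trace_smul, hρ1, hτ1]
        simp only [smul_eq_mul, mul_one]
        exact_mod_cast hab
      · ext j
        have h1 := congrFun hx j
        have h2 := congrFun hy j
        simp only [wpt, Pi.add_apply] at h1 h2
        simp only [wpt, Matrix.add_mul, Matrix.smul_mul, Matrix.trace_add, Matrix.trace_smul,
          smul_eq_mul, Complex.add_re, Complex.re_ofReal_mul, h1, h2, Pi.add_apply, Pi.smul_apply]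
        have : b = 1 - a := by linarith
        rw [this]; ring
  · rintro y ⟨ρ, ⟨hρ, hρ1⟩, hy⟩
    set h := hρ.isHermitian
    have hsum : ∑ i, h.eigenvalues i = 1 := by
      have h2 := h.trace_eq_sum_eigenvalues
      rw [hρ1] at h2
      have h3 := congrArg Complex.re h2
      simpa using h3.symm
    have hyeq : y = ∑ i, h.eigenvalues i • QF (shiftOp A p) (h.eigenvectorBasis i) := by
      ext j
      have h1 := trace_shift A p ρ hρ1 j
      rw [trace_spec _ _ h, hy] at h1
      simp only [Complex.re_sum, Complex.re_ofReal_mul, Pi.add_apply, add_sub_cancel_right] at h1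
      rw [← h1]
      simp [QF, shiftOp, Finset.sum_apply]
    rw [hyeq]
    refine (convex_convexHull ℝ _).sum_mem (fun i _ => hρ.eigenvalues_nonneg i) hsum fun i _ => ?_
    exact subset_convexHull _ _ ⟨_, mem_sphere_zero_iff_norm.2 (h.eigenvectorBasis.norm_eq_one i), rfl⟩

theorem oneDim_shift {G : Set (Fin 3 → ℝ)} {p : Fin 3 → ℝ} (hp : p ∈ G) (hd : convDim G = 1) :
    OneDim {y | y + p ∈ G} ∧ ∃ g ∈ {y | y + p ∈ G}, g ≠ 0 := by
  have hmem : ∀ y, y + p ∈ G → y ∈ (affineSpan ℝ G).direction := by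
    intro y hy
    have := AffineSubspace.vsub_mem_direction (subset_affineSpan ℝ G hy) (subset_affineSpan ℝ G hp)
    simpa using this
  refine ⟨?_, ?_⟩
  · intro g hg hg0 w hw
    have hg' : (⟨g, hmem g hg⟩ : (affineSpan ℝ G).direction) ≠ 0 := by
      intro h; exact hg0 (congrArg Subtype.val h)
    obtain ⟨c, hc⟩ := (finrank_eq_one_iff_of_nonzero' _ hg').1 hd ⟨w, hmem w hw⟩
    exact ⟨c, (congrArg Subtype.val hc).symm⟩
  · by_contra hcon
    push Not at hcon
    have hG : G = {p} := by
      refine Set.Subset.antisymm (fun x hx => ?_) (by rintro _ rfl; exact hp)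
      have := hcon (x - p) (by simpa using hx)
      exact sub_eq_zero.1 this
    rw [convDim, hG, direction_affineSpan, vectorSpan_singleton] at hd
    simp at hd

theorem face_shift {W G : Set (Fin 3 → ℝ)} (p : Fin 3 → ℝ) (h : IsFaceOf W G) :
    Convex ℝ {y | y + p ∈ G} ∧ IsExtreme ℝ {y | y + p ∈ W} {y | y + p ∈ G} := by
  have hadd : ∀ (x y : Fin 3 → ℝ) (a b : ℝ), a + b = 1 →
      a • (x + p) + b • (y + p) = a • x + b • y + p := by
    intro x y a b hab
    have : b = 1 - a := by linarith
    subst this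
    ext i; simp; ring
  refine ⟨?_, fun y hy => h.2.subset hy, ?_⟩
  · intro x hx y hy a b ha hb hab
    have := h.1 hx hy ha hb hab
    rwa [hadd x y a b hab] at this
  · rintro x hx y hy _ hz ⟨a, b, ha, hb, hab, rfl⟩
    exact h.2.left_mem_of_mem_openSegment hx hy hz ⟨a, b, ha, hb, hab, hadd x y a b hab⟩

open scoped Pointwise in
theorem vs_shift (S : Set (Fin 3 → ℝ)) (p : Fin 3 → ℝ) :
    vectorSpan ℝ {y | y + p ∈ S} = vectorSpan ℝ S := by
  have himg : S = p +ᵥ {y | y + p ∈ S} := by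
    ext x
    rw [Set.mem_vadd_set_iff_neg_vadd_mem]
    simp
  conv_rhs => rw [himg, vectorSpan_vadd]

end Transfer

/-- A nonempty intersection of three mutually distinct
one-dimensional faces of `W` is a singleton consisting of a corner point. -/
theorem stmt0 (A : Fin 3 → Matrix (Fin 4) (Fin 4) ℂ)
    (hA : ∀ i, (A i).IsHermitian)
    (hdim : convDim (JNR A) = 3)
    (G₁ G₂ G₃ : Set (Fin 3 → ℝ))
    (hG₁ : IsFaceOf (JNR A) G₁) (hd₁ : convDim G₁ = 1)
    (hG₂ : IsFaceOf (JNR A) G₂) (hd₂ : convDim G₂ = 1)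
    (hG₃ : IsFaceOf (JNR A) G₃) (hd₃ : convDim G₃ = 1)
    (h12 : G₁ ≠ G₂) (h13 : G₁ ≠ G₃) (h23 : G₂ ≠ G₃)
    (hne : (G₁ ∩ G₂ ∩ G₃).Nonempty) :
    ∃ p, G₁ ∩ G₂ ∩ G₃ = {p} ∧ IsCornerPoint (JNR A) p := by
  obtain ⟨p, ⟨⟨hp1, hp2⟩, hp3⟩⟩ := hne
  have hCC := CC_shift A p
  have hpW : p ∈ JNR A := hG₁.2.subset hp1
  have hint : (interior (CC (shiftOp A p))).Nonempty := by
    refine (convex_convexHull ℝ _).interior_nonempty_iff_affineSpan_eq_top.2 ?_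
    have hd : (affineSpan ℝ (JNR A)).direction = ⊤ := by
      apply Submodule.eq_top_of_finrank_eq
      rw [show Module.finrank ℝ (affineSpan ℝ (JNR A)).direction = 3 from hdim]
      simp
    have hvs : vectorSpan ℝ (CC (shiftOp A p)) = vectorSpan ℝ (JNR A) := by
      rw [hCC]; exact vs_shift _ _
    have h0 : (0 : Fin 3 → ℝ) ∈ CC (shiftOp A p) := by rw [hCC]; simpa using hpW
    have hne0 : ((affineSpan ℝ (CC (shiftOp A p))) : Set (Fin 3 → ℝ)).Nonempty :=
      ⟨0, subset_affineSpan ℝ _ h0⟩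
    change affineSpan ℝ (CC (shiftOp A p)) = ⊤
    rw [← AffineSubspace.direction_eq_top_iff_of_nonempty hne0, direction_affineSpan]
    exact hvs.trans ((direction_affineSpan ℝ (JNR A)).symm.trans hd)
  have hinj : ∀ G K : Set (Fin 3 → ℝ), G ≠ K → {y | y + p ∈ G} ≠ {y | y + p ∈ K} := by
    intro G K hGK h
    apply hGK
    ext x
    have := congrArg (fun s => (x - p) ∈ s) h
    simpa using this
  have hfs : ∀ i : Fin 3, IsFaceOf (JNR A) (![G₁, G₂, G₃] i) := by
    intro i; fin_cases i <;> assumption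
  have hdd : ∀ i : Fin 3, convDim (![G₁, G₂, G₃] i) = 1 := by
    intro i; fin_cases i <;> assumption
  have hpp : ∀ i : Fin 3, p ∈ ![G₁, G₂, G₃] i := by
    intro i; fin_cases i <;> assumption
  have hnn : ∀ i j : Fin 3, i ≠ j → ![G₁, G₂, G₃] i ≠ ![G₁, G₂, G₃] j := by
    intro i j hij
    fin_cases i <;> fin_cases j
    · exact absurd rfl hij
    · exact h12
    · exact h13
    · exact h12.symm
    · exact absurd rfl hij
    · exact h23
    · exact h13.symm
    · exact h23.symm
    · exact absurd rfl hij
  obtain ⟨hs, hspan⟩ := main_abstract (by simp) (shiftOp A p) (shiftOp_symm A hA p) hint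
    (fun i => {y | y + p ∈ ![G₁, G₂, G₃] i}) (fun i => (face_shift p (hfs i)).1)
    (fun i => by rw [hCC]; exact (face_shift p (hfs i)).2)
    (fun i => by simpa using hpp i)
    (fun i => (oneDim_shift (hpp i) (hdd i)).1) (fun i => (oneDim_shift (hpp i) (hdd i)).2)
    (fun i j hij => hinj _ _ (hnn i j hij))
  refine ⟨p, ?_, hpW, ?_⟩
  · refine Set.Subset.antisymm ?_ ?_
    · rintro x ⟨⟨hx1, hx2⟩, hx3⟩
      have hx : x - p ∈ ({0} : Set (Fin 3 → ℝ)) := by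
        rw [← hs]
        refine ⟨⟨?_, ?_⟩, ?_⟩
        · show x - p + p ∈ G₁
          simpa using hx1
        · show x - p + p ∈ G₂
          simpa using hx2
        · show x - p + p ∈ G₃
          simpa using hx3
      exact sub_eq_zero.1 hx
    · rintro _ rfl
      exact ⟨⟨hp1, hp2⟩, hp3⟩
  · rw [← hspan]
    congr 1
    ext u
    constructor
    · intro hu y hy
      rw [hCC] at hy
      have := hu (y + p) hy
      rwa [add_sub_cancel_right] at this
    · intro hu y hy
      exact hu (y - p) (by rw [hCC]; simpa using hy)
end
end

section
/- Let A₁, A₂, A₃ be hermitian 4×4 complex matrices whose joint numerical range W = W(A₁,A₂,A₃) has dimension 3. Suppose F is a non-elliptic face of W, G is a rank-3 face of W, and F ≠ G. Then G is two-dimensional, F ∩ G is a one-dimensional face of F and a one-dimensional face of G, and F ∩ G is an exposed face of W. -/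
open Matrix ComplexOrder

noncomputable section

lemma face_mem {C F : Set (Fin 3 → ℝ)} (hF : IsFaceOf C F) {x y z : Fin 3 → ℝ} {ε : ℝ}
    (hx : x ∈ F) (hy : y ∈ C) (hε : 0 < ε) (hz : z ∈ C) (hzz : z = x + ε • (x - y)) : y ∈ F := by
  refine hF.2.left_mem_of_mem_openSegment hy hz hx ?_
  refine ⟨ε / (1 + ε), 1 / (1 + ε), by positivity, by positivity, by field_simp; ring, ?_⟩
  subst hzz
  ext i
  simp
  field_simp
  ring

lemma face_eq_of_interior {C F : Set (Fin 3 → ℝ)} (hF : IsFaceOf C F) {x : Fin 3 → ℝ}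
    (hx : x ∈ F) (hxi : x ∈ interior C) : F = C := by
  refine Set.Subset.antisymm hF.2.subset fun y hy => ?_
  have hc : Filter.Tendsto (fun ε : ℝ => x + ε • (x - y)) (nhds 0) (nhds x) := by
    have : Continuous (fun ε : ℝ => x + ε • (x - y)) := by fun_prop
    simpa using this.tendsto 0
  have h1 := hc (mem_interior_iff_mem_nhds.1 hxi)
  have h2 : ∀ᶠ ε in nhdsWithin (0:ℝ) (Set.Ioi 0), x + ε • (x - y) ∈ C :=
    nhdsWithin_le_nhds h1
  obtain ⟨ε, h3, h4⟩ := (h2.and self_mem_nhdsWithin).exists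
  exact face_mem hF hx hy h4 h3 rfl

lemma face_eq_of_span {C F : Set (Fin 3 → ℝ)} (hF : IsFaceOf C F) (hne : F.Nonempty)
    (hs : C ⊆ affineSpan ℝ F) : F = C := by
  refine Set.Subset.antisymm hF.2.subset fun y hy => ?_
  obtain ⟨x, hx⟩ := Set.Nonempty.intrinsicInterior hF.1 hne
  have hxF := intrinsicInterior_subset hx
  rw [mem_intrinsicInterior] at hx
  obtain ⟨x', hx', rfl⟩ := hx
  let g : ℝ → affineSpan ℝ F := fun ε => ⟨x' + ε • (x' - y), by
    have := AffineMap.lineMap_mem (-ε) x'.2 (hs hy)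
    convert this using 1
    simp [AffineMap.lineMap_apply]
    ext i
    simp
    ring⟩
  have hg : Continuous g := by
    apply Continuous.subtype_mk
    fun_prop
  have hg0 : g 0 = x' := by simp [g]
  have hc : Filter.Tendsto g (nhds 0) (nhds x') := by
    have := hg.tendsto 0
    rwa [hg0] at this
  have h1 := hc (mem_interior_iff_mem_nhds.1 hx')
  have h2 : ∀ᶠ ε in nhdsWithin (0:ℝ) (Set.Ioi 0), (g ε : Fin 3 → ℝ) ∈ F :=
    nhdsWithin_le_nhds h1
  obtain ⟨ε, h3, h4⟩ := (h2.and self_mem_nhdsWithin).exists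
  exact face_mem hF hxF hy h4 (hF.2.subset h3) rfl

lemma dotR_add {d : ℕ} (u x y : Fin d → ℝ) : dotR u (x + y) = dotR u x + dotR u y := by
  simp [dotR, mul_add, Finset.sum_add_distrib]

lemma dotR_smul {d : ℕ} (u x : Fin d → ℝ) (a : ℝ) : dotR u (a • x) = a * dotR u x := by
  simp [dotR, Finset.mul_sum]; congr; ext; ring

lemma dotR_sub {d : ℕ} (u x y : Fin d → ℝ) : dotR u (x - y) = dotR u x - dotR u y := by
  simp [dotR, mul_sub, Finset.sum_sub_distrib]

/-- dot as linear map -/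
def dotL {d : ℕ} (u : Fin d → ℝ) : (Fin d → ℝ) →ₗ[ℝ] ℝ where
  toFun := dotR u
  map_add' := dotR_add u
  map_smul' a x := by simp [dotR_smul]

lemma dotL_apply {d : ℕ} (u x : Fin d → ℝ) : dotL u x = dotR u x := rfl

lemma exists_support {W F : Set (Fin 3 → ℝ)} (hW : Convex ℝ W) (hdim : convDim W = 3)
    (hF : IsFaceOf W F) (hne : F.Nonempty) (hFW : F ≠ W) :
    ∃ (u : Fin 3 → ℝ) (c : ℝ), (∀ x ∈ W, c ≤ dotR u x) ∧ (∀ x ∈ F, dotR u x = c) ∧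
      ∃ x ∈ W, dotR u x ≠ c := by
  have hWne : W.Nonempty := hne.mono hF.2.subset
  have hspan : affineSpan ℝ W = ⊤ := by
    rw [← AffineSubspace.direction_eq_top_iff_of_nonempty ((affineSpan_nonempty ℝ).2 hWne)]
    apply Submodule.eq_top_of_finrank_eq
    unfold convDim at hdim
    rw [hdim]; simp
  have hint : (interior W).Nonempty := hW.interior_nonempty_iff_affineSpan_eq_top.2 hspan
  have hdis : Disjoint (interior W) F := by
    rw [Set.disjoint_left]
    intro x hx hxF
    exact hFW (face_eq_of_interior hF hxF hx)
  obtain ⟨f, s, hf1, hf2⟩ := geometric_hahn_banach_open hW.interior isOpen_interior hF.1 hdis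
  have hle : ∀ x ∈ W, f x ≤ s := by
    intro x hx
    have : x ∈ closure (interior W) := by
      rw [hW.closure_interior_eq_closure_of_nonempty_interior hint]
      exact subset_closure hx
    exact closure_minimal (fun y hy => (hf1 y hy).le) (isClosed_le f.continuous continuous_const) this
  have hfe : ∀ x, dotR (fun i => - f (fun j => if i = j then 1 else 0)) x = - f x := by
    intro x
    have := LinearMap.pi_apply_eq_sum_univ (f : (Fin 3 → ℝ) →ₗ[ℝ] ℝ) x
    simp only [ContinuousLinearMap.coe_coe, smul_eq_mul] at this
    rw [this]
    simp only [dotR, ← Finset.sum_neg_distrib]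
    refine Finset.sum_congr rfl fun i _ => ?_
    ring
  refine ⟨fun i => - f (fun j => if i = j then 1 else 0), -s, ?_, ?_, ?_⟩
  · intro x hx; rw [hfe]; linarith [hle x hx]
  · intro x hx; rw [hfe]; linarith [hle x (hF.2.subset hx), hf2 x hx]
  · obtain ⟨x, hx⟩ := hint
    refine ⟨x, interior_subset hx, ?_⟩
    rw [hfe]; linarith [hf1 x hx]

lemma direction_le {S : Set (Fin 3 → ℝ)} {u : Fin 3 → ℝ} {c : ℝ} (h : ∀ x ∈ S, dotR u x = c) :
    (affineSpan ℝ S).direction ≤ LinearMap.ker (dotL u) := by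
  rw [direction_affineSpan, vectorSpan, Submodule.span_le]
  rintro _ ⟨x, hx, y, hy, rfl⟩
  simp [dotL_apply, dotR_sub, h x hx, h y hy]

lemma sub_mem_dir {S : Set (Fin 3 → ℝ)} {x y : Fin 3 → ℝ} (hx : x ∈ S) (hy : y ∈ S) :
    x - y ∈ (affineSpan ℝ S).direction := by
  rw [direction_affineSpan]; exact vsub_mem_vectorSpan ℝ hx hy

lemma subsingleton_of_convDim {S : Set (Fin 3 → ℝ)} (h : convDim S = 0) {x y : Fin 3 → ℝ}
    (hx : x ∈ S) (hy : y ∈ S) : x = y := by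
  unfold convDim at h
  have h1 := sub_mem_dir hx hy
  rw [Submodule.finrank_eq_zero.1 h] at h1
  exact sub_eq_zero.1 (by simpa using h1)

lemma ker_lt_top {u : Fin 3 → ℝ} {x : Fin 3 → ℝ} (h : dotR u x ≠ 0) :
    Module.finrank ℝ (LinearMap.ker (dotL u)) < 3 := by
  have := Submodule.finrank_lt (s := LinearMap.ker (dotL u)) (by
    intro h'
    have : x ∈ LinearMap.ker (dotL u) := by rw [h']; trivial
    exact h this)
  simpa using this

lemma face_eq_exposed {W F : Set (Fin 3 → ℝ)} (hF : IsFaceOf W F) (hne : F.Nonempty)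
    (hd : convDim F = 2) {u : Fin 3 → ℝ} {c : ℝ}
    (hu : ∀ x ∈ F, dotR u x = c) (hx : ∃ x ∈ W, dotR u x ≠ c) :
    F = {x ∈ W | dotR u x = c} := by
  have hsub : F ⊆ {x ∈ W | dotR u x = c} := fun x hx => ⟨hF.2.subset hx, hu x hx⟩
  refine face_eq_of_span ⟨hF.1, hF.2.mono (fun x hx => hx.1) hsub⟩ hne ?_
  intro y hy
  obtain ⟨x0, hx0⟩ := hne
  obtain ⟨z, hz, hzc⟩ := hx
  have h1 : (affineSpan ℝ F).direction = LinearMap.ker (dotL u) := by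
    apply Submodule.eq_of_le_of_finrank_le (direction_le hu)
    have := ker_lt_top (u := u) (x := z - x0) (by rw [dotR_sub, hu x0 hx0]; exact sub_ne_zero.2 hzc)
    unfold convDim at hd
    omega
  have h2 : y - x0 ∈ (affineSpan ℝ F).direction := by
    rw [h1]; simp [dotL_apply, dotR_sub, hu x0 hx0, hy.2]
  have := AffineSubspace.vadd_mem_of_mem_direction h2 (subset_affineSpan ℝ F hx0)
  simpa using this

open scoped MatrixOrder in
lemma psd_factor {M : Matrix (Fin 4) (Fin 4) ℂ} (h : M.PosSemidef) :
    ∃ C : Matrix (Fin 4) (Fin 4) ℂ, M = Cᴴ * C := by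
  obtain ⟨C, hC⟩ := CStarAlgebra.nonneg_iff_eq_star_mul_self.1 (Matrix.nonneg_iff_posSemidef.2 h)
  exact ⟨C, hC⟩

lemma trace_zero {ρ H : Matrix (Fin 4) (Fin 4) ℂ} (hρ : ρ.PosSemidef) (hH : H.PosSemidef)
    (h : ((ρ * H).trace).re = 0) : H * ρ = 0 := by
  obtain ⟨C, rfl⟩ := psd_factor hρ
  obtain ⟨D, rfl⟩ := psd_factor hH
  have h1 : (Cᴴ * C * (Dᴴ * D)).trace = ((D * Cᴴ)ᴴ * (D * Cᴴ)).trace := by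
    rw [conjTranspose_mul, conjTranspose_conjTranspose]
    rw [show Cᴴ * C * (Dᴴ * D) = Cᴴ * (C * Dᴴ * D) by simp only [Matrix.mul_assoc],
      Matrix.trace_mul_comm]
    simp only [Matrix.mul_assoc]
  rw [h1] at h
  have h2 : 0 ≤ ((D * Cᴴ)ᴴ * (D * Cᴴ)).trace := (posSemidef_conjTranspose_mul_self _).trace_nonneg
  have h3 : ((D * Cᴴ)ᴴ * (D * Cᴴ)).trace = 0 := by
    apply Complex.ext h
    exact (Complex.le_def.1 h2).2.symm
  have h4 := trace_conjTranspose_mul_self_eq_zero_iff.1 h3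
  calc Dᴴ * D * (Cᴴ * C) = Dᴴ * (D * Cᴴ) * C := by simp only [Matrix.mul_assoc]
    _ = 0 := by rw [h4]; simp

lemma wpt_add {n : Type*} [Fintype n] {k : ℕ} (A : Fin k → Matrix n n ℂ) (ρ σ : Matrix n n ℂ) :
    wpt A (ρ + σ) = wpt A ρ + wpt A σ := by
  ext i; simp [wpt, Matrix.add_mul]

lemma wpt_smul {n : Type*} [Fintype n] {k : ℕ} (A : Fin k → Matrix n n ℂ) (ρ : Matrix n n ℂ)
    (t : ℝ) : wpt A ((t : ℂ) • ρ) = t • wpt A ρ := by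
  ext i; simp [wpt]

lemma density_comb {n : Type*} [Fintype n] {ρ σ : Matrix n n ℂ} (h1 : IsDensity ρ)
    (h2 : IsDensity σ) {a b : ℝ} (ha : 0 ≤ a) (hb : 0 ≤ b) (hab : a + b = 1) :
    IsDensity ((a : ℂ) • ρ + (b : ℂ) • σ) := by
  refine ⟨(h1.1.smul ?_).add (h2.1.smul ?_), ?_⟩
  · exact_mod_cast ha
  · exact_mod_cast hb
  · simp [h1.2, h2.2]; exact_mod_cast hab

lemma JNR_convex {n : Type*} [Fintype n] {k : ℕ} (A : Fin k → Matrix n n ℂ) :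
    Convex ℝ (JNR A) := by
  rintro _ ⟨ρ, hρ, rfl⟩ _ ⟨σ, hσ, rfl⟩ a b ha hb hab
  exact ⟨_, density_comb hρ hσ ha hb hab, by rw [wpt_add, wpt_smul, wpt_smul]⟩

/-- The shifted pencil. -/
def Hm (A : Fin 3 → Matrix (Fin 4) (Fin 4) ℂ) (u : Fin 3 → ℝ) (c : ℝ) :
    Matrix (Fin 4) (Fin 4) ℂ := ∑ i, (u i : ℂ) • A i - (c : ℂ) • 1

lemma trace_Hm (A : Fin 3 → Matrix (Fin 4) (Fin 4) ℂ) (u : Fin 3 → ℝ) (c : ℝ)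
    {ρ : Matrix (Fin 4) (Fin 4) ℂ} (h : ρ.trace = 1) :
    ((ρ * Hm A u c).trace).re = dotR u (wpt A ρ) - c := by
  simp [Hm, dotR, wpt, Matrix.mul_sub, Matrix.mul_sum, h]

lemma Hm_herm {A : Fin 3 → Matrix (Fin 4) (Fin 4) ℂ} (hA : ∀ i, (A i).IsHermitian)
    (u : Fin 3 → ℝ) (c : ℝ) : (Hm A u c).IsHermitian := by
  have h := fun i => (hA i).eq
  simp [Matrix.IsHermitian, Hm, conjTranspose_sub, conjTranspose_sum, conjTranspose_smul, h]

/-- pure state -/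
def ket (x : Fin 4 → ℂ) : Matrix (Fin 4) (Fin 4) ℂ := vecMulVec x (star x)

lemma ket_density {x : Fin 4 → ℂ} (h : star x ⬝ᵥ x = 1) : IsDensity (ket x) :=
  ⟨posSemidef_vecMulVec_self_star x, by rw [ket, trace_vecMulVec, dotProduct_comm, h]⟩

lemma trace_ket (x : Fin 4 → ℂ) (B : Matrix (Fin 4) (Fin 4) ℂ) :
    (ket x * B).trace = star x ⬝ᵥ (B *ᵥ x) := by
  rw [ket, Matrix.trace_mul_comm, Matrix.mul_vecMulVec, trace_vecMulVec, dotProduct_comm]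

lemma mul_ket (x : Fin 4 → ℂ) (B : Matrix (Fin 4) (Fin 4) ℂ) (h : B *ᵥ x = 0) :
    B * ket x = 0 := by
  rw [ket, Matrix.mul_vecMulVec, h]; ext; simp [vecMulVec]

lemma of_mul_ket (x : Fin 4 → ℂ) (B : Matrix (Fin 4) (Fin 4) ℂ) (hx : star x ⬝ᵥ x = 1)
    (h : B * ket x = 0) : B *ᵥ x = 0 := by
  have : (B * ket x) *ᵥ x = 0 := by rw [h]; simp
  rw [← Matrix.mulVec_mulVec, ket, vecMulVec_mulVec, hx] at this
  simpa using this

lemma exists_unit {x : Fin 4 → ℂ} (h : x ≠ 0) : ∃ r : ℝ, 0 < r ∧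
    star ((r : ℂ) • x) ⬝ᵥ ((r : ℂ) • x) = 1 := by
  have h0 : 0 < star x ⬝ᵥ x := dotProduct_star_self_pos_iff.2 h
  obtain ⟨h1, h2⟩ := Complex.lt_def.1 h0
  have h3 : star x ⬝ᵥ x = ((star x ⬝ᵥ x).re : ℂ) := Complex.ext (by simp) (by simpa using h2.symm)
  simp only [Complex.zero_re] at h1
  refine ⟨(Real.sqrt ((star x ⬝ᵥ x).re))⁻¹, by positivity, ?_⟩
  simp only [star_smul, smul_dotProduct, dotProduct_smul, smul_eq_mul]
  rw [h3]
  simp only [Complex.star_def, Complex.conj_ofReal, Complex.ofReal_re]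
  norm_cast
  rw [← mul_assoc, ← mul_inv, Real.mul_self_sqrt h1.le, inv_mul_cancel₀ h1.ne']

lemma Hm_psd {A : Fin 3 → Matrix (Fin 4) (Fin 4) ℂ} (hA : ∀ i, (A i).IsHermitian)
    {u : Fin 3 → ℝ} {c : ℝ} (h : ∀ x ∈ JNR A, c ≤ dotR u x) : (Hm A u c).PosSemidef := by
  refine PosSemidef.of_dotProduct_mulVec_nonneg (Hm_herm hA u c) fun x => ?_
  have him : (star x ⬝ᵥ Hm A u c *ᵥ x).im = 0 := (Hm_herm hA u c).im_star_dotProduct_mulVec_self x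
  rw [Complex.le_def]
  refine ⟨?_, him.symm⟩
  by_cases hx : x = 0
  · simp [hx]
  obtain ⟨r, hr, hr1⟩ := exists_unit hx
  have h1 := ket_density hr1
  have h2 := trace_Hm A u c h1.2
  have h3 := h _ ⟨_, h1, rfl⟩
  rw [trace_ket] at h2
  simp only [star_smul, smul_dotProduct, mulVec_smul, dotProduct_smul, smul_eq_mul,
    Complex.star_def, Complex.conj_ofReal, Complex.re_ofReal_mul] at h2
  have h4 : 0 ≤ r * (r * (star x ⬝ᵥ Hm A u c *ᵥ x).re) := by rw [h2]; linarith
  have h5 := nonneg_of_mul_nonneg_right h4 hr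
  exact nonneg_of_mul_nonneg_right h5 hr

/-- image of densities annihilated by B -/
def imK (A : Fin 3 → Matrix (Fin 4) (Fin 4) ℂ) (B : Matrix (Fin 4) (Fin 4) ℂ) :
    Set (Fin 3 → ℝ) := wpt A '' {ρ | IsDensity ρ ∧ B * ρ = 0}

lemma wpt_mem_exposed {A : Fin 3 → Matrix (Fin 4) (Fin 4) ℂ} (hA : ∀ i, (A i).IsHermitian)
    {u : Fin 3 → ℝ} {c : ℝ} (h : ∀ x ∈ JNR A, c ≤ dotR u x) {ρ : Matrix (Fin 4) (Fin 4) ℂ}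
    (hρ : IsDensity ρ) : dotR u (wpt A ρ) = c ↔ Hm A u c * ρ = 0 := by
  have h1 := trace_Hm A u c hρ.2
  constructor
  · intro h2
    exact trace_zero hρ.1 (Hm_psd hA h) (by rw [h1, h2]; simp)
  · intro h2
    rw [Matrix.trace_mul_comm, h2] at h1
    simp at h1
    linarith

lemma exposed_eq {A : Fin 3 → Matrix (Fin 4) (Fin 4) ℂ} (hA : ∀ i, (A i).IsHermitian)
    {u : Fin 3 → ℝ} {c : ℝ} (h : ∀ x ∈ JNR A, c ≤ dotR u x) :
    {x ∈ JNR A | dotR u x = c} = imK A (Hm A u c) := by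
  ext x
  constructor
  · rintro ⟨⟨ρ, hρ, rfl⟩, h2⟩
    exact ⟨ρ, ⟨hρ, (wpt_mem_exposed hA h hρ).1 h2⟩, rfl⟩
  · rintro ⟨ρ, ⟨hρ, h2⟩, rfl⟩
    exact ⟨⟨ρ, hρ, rfl⟩, (wpt_mem_exposed hA h hρ).2 h2⟩

lemma param {m : ℕ} {A : Fin 3 → Matrix (Fin 4) (Fin 4) ℂ} {B : Matrix (Fin 4) (Fin 4) ℂ}
    {V : Matrix (Fin 4) (Fin m) ℂ} (hV : Vᴴ * V = 1) (hBV : B * V = 0)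
    (hs : ∀ x : Fin 4 → ℂ, B *ᵥ x = 0 → Vᴴ *ᵥ x = 0 → x = 0) :
    imK A B = JNR (fun i => Vᴴ * A i * V) := by
  ext x
  constructor
  · rintro ⟨ρ, ⟨hρ, h2⟩, rfl⟩
    have h3 : ρ = V * (Vᴴ * ρ) := by
      rw [← sub_eq_zero]
      have h4 : ∀ j, (ρ - V * (Vᴴ * ρ)) *ᵥ (Pi.single j 1) = 0 := by
        intro j
        apply hs
        · rw [mulVec_mulVec, Matrix.mul_sub, h2, ← Matrix.mul_assoc, hBV]; simp; rfl
        · rw [mulVec_mulVec, Matrix.mul_sub, ← Matrix.mul_assoc, hV]; simp; rfl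
      ext i j
      have := congrFun (h4 j) i
      simpa using this
    have h5 : ρ = V * (Vᴴ * ρ * V) * Vᴴ := by
      have h6 : ρ = ρ * V * Vᴴ := by
        have := congrArg conjTranspose h3
        simpa [conjTranspose_mul, hρ.1.1.eq, Matrix.mul_assoc] using this
      conv_lhs => rw [h3, h6]
      simp only [Matrix.mul_assoc]
    refine ⟨Vᴴ * ρ * V, ⟨hρ.1.conjTranspose_mul_mul_same V, ?_⟩, ?_⟩
    · rw [Matrix.trace_mul_comm, ← h3, hρ.2]
    · ext i
      simp only [wpt]
      congr 1
      conv_rhs => rw [h5]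
      rw [← Matrix.mul_assoc (Vᴴ * ρ * V), Matrix.trace_mul_comm]
      simp only [Matrix.mul_assoc]
  · rintro ⟨σ, hσ, rfl⟩
    refine ⟨V * σ * Vᴴ, ⟨⟨hσ.1.mul_mul_conjTranspose_same V, ?_⟩, ?_⟩, ?_⟩
    · rw [Matrix.trace_mul_comm, ← Matrix.mul_assoc, hV, Matrix.one_mul, hσ.2]
    · rw [← Matrix.mul_assoc, ← Matrix.mul_assoc, hBV]; simp
    · ext i
      simp only [wpt]
      congr 1
      rw [Matrix.mul_assoc, Matrix.mul_assoc, Matrix.trace_mul_comm]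
      simp only [Matrix.mul_assoc]

/-- E -/
abbrev E4 := EuclideanSpace ℂ (Fin 4)

/-- kernel -/
def Kb (B : Matrix (Fin 4) (Fin 4) ℂ) : Submodule ℂ E4 where
  carrier := {x | B *ᵥ x.ofLp = 0}
  add_mem' {x y} hx hy := by simp_all [mulVec_add]
  zero_mem' := by simp
  smul_mem' c x hx := by simp_all [mulVec_smul]

lemma mem_Kb {B : Matrix (Fin 4) (Fin 4) ℂ} {x : E4} : x ∈ Kb B ↔ B *ᵥ x.ofLp = 0 := Iff.rfl

/-- matrix of a family -/
def Vb {m : ℕ} (b : Fin m → E4) : Matrix (Fin 4) (Fin m) ℂ := Matrix.of fun i j => b j i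

lemma Vb_conj_mul {m : ℕ} (b : Fin m → E4) (B : Matrix (Fin 4) (Fin 4) ℂ) (j k : Fin m) :
    ((Vb b)ᴴ * B * Vb b) j k = star (b j).ofLp ⬝ᵥ (B *ᵥ (b k).ofLp) := by
  rw [Matrix.mul_assoc]
  simp [Matrix.mul_apply, Vb, dotProduct, mulVec]

lemma star_dot (x y : E4) : star x.ofLp ⬝ᵥ y.ofLp = inner ℂ x y := by
  rw [EuclideanSpace.inner_eq_star_dotProduct, dotProduct_comm]

lemma param_b {m : ℕ} {A : Fin 3 → Matrix (Fin 4) (Fin 4) ℂ} {B : Matrix (Fin 4) (Fin 4) ℂ}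
    {b : Fin m → E4} (hb : Orthonormal ℂ b) (hK : ∀ j, b j ∈ Kb B)
    (hm : Module.finrank ℂ (Kb B) = m) :
    imK A B = JNR (fun i => (Vb b)ᴴ * A i * Vb b) := by
  apply param
  · ext j k
    have := Vb_conj_mul b 1 j k
    simp only [Matrix.mul_one, one_mulVec] at this
    rw [this, star_dot, orthonormal_iff_ite.1 hb, Matrix.one_apply]
  · ext i j
    have := congrFun (hK j) i
    simpa [Matrix.mul_apply, mulVec, dotProduct, Vb] using this
  · intro x hx hV
    have hspan : Submodule.span ℂ (Set.range b) = Kb B := by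
      apply Submodule.eq_of_le_of_finrank_eq
      · rw [Submodule.span_le]; rintro _ ⟨j, rfl⟩; exact hK j
      · rw [finrank_span_eq_card hb.linearIndependent, hm]; simp
    have h1 : WithLp.toLp 2 x ∈ Submodule.span ℂ (Set.range b) := by
      rw [hspan]; exact hx
    have h2 : ∀ y ∈ Submodule.span ℂ (Set.range b), inner ℂ y (WithLp.toLp 2 x) = 0 := by
      intro y hy
      induction hy using Submodule.span_induction with
      | mem y hy =>
        obtain ⟨j, rfl⟩ := hy
        rw [← star_dot]
        have := congrFun hV j
        simpa [mulVec, dotProduct, Vb] using this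
      | zero => simp
      | add y z _ _ h1 h2 => rw [inner_add_left, h1, h2]; simp
      | smul c y _ h => rw [inner_smul_left, h]; simp
    have := inner_self_eq_zero.1 (h2 _ h1)
    simpa using this

/-- E3 -/
abbrev E3 := EuclideanSpace ℝ (Fin 3)

lemma elliptic_of_ball (c0 : Fin 3 → ℝ) (T : E3 →ₗ[ℝ] (Fin 3 → ℝ)) {F : Set (Fin 3 → ℝ)}
    (hF : F = {y | ∃ x : E3, ‖x‖ ≤ 1 ∧ y = c0 + T x}) (hd : convDim F = 2) :
    IsEllipticDisk F := by
  have hc0 : c0 ∈ F := by rw [hF]; exact ⟨0, by simp, by simp⟩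
  have hdir : (affineSpan ℝ F).direction = LinearMap.range T := by
    apply le_antisymm
    · rw [direction_affineSpan, vectorSpan, Submodule.span_le]
      rintro _ ⟨x, hx, y, hy, rfl⟩
      rw [hF] at hx hy
      obtain ⟨x, _, rfl⟩ := hx
      obtain ⟨y, _, rfl⟩ := hy
      exact ⟨x - y, by simp⟩
    · rintro _ ⟨x, rfl⟩
      have h1 : c0 + T ((‖x‖ + 1)⁻¹ • x) ∈ F := by
        rw [hF]
        refine ⟨_, ?_, rfl⟩
        rw [norm_smul, norm_inv, Real.norm_of_nonneg (by positivity), inv_mul_le_iff₀ (by positivity)]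
        linarith
      have h2 := sub_mem_dir h1 hc0
      have h3 := Submodule.smul_mem _ (‖x‖ + 1) h2
      have h4 : ‖x‖ + 1 ≠ 0 := by positivity
      simpa [smul_smul, h4] using h3
  have hr : Module.finrank ℝ (LinearMap.range T) = 2 := by rw [← hdir]; exact hd
  have hk : Module.finrank ℝ (LinearMap.ker T)ᗮ = 2 := by
    have h1 := LinearMap.finrank_range_add_finrank_ker T
    have h2 := Submodule.finrank_add_finrank_orthogonal (LinearMap.ker T)
    simp only [finrank_euclideanSpace, Fintype.card_fin] at h1 h2
    omega
  let b : OrthonormalBasis (Fin 2) ℝ (LinearMap.ker T)ᗮ :=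
    (stdOrthonormalBasis ℝ (LinearMap.ker T)ᗮ).reindex (finCongr hk)
  let g : (Fin 2 → ℝ) →ₗ[ℝ] E3 := (LinearMap.ker T)ᗮ.subtype ∘ₗ
    b.repr.symm.toLinearEquiv.toLinearMap ∘ₗ
    (WithLp.linearEquiv 2 ℝ (Fin 2 → ℝ)).symm.toLinearMap
  have hg : ∀ v, g v = (b.repr.symm (WithLp.toLp 2 v) : E3) := fun v => rfl
  have hgn : ∀ v, ‖g v‖ ^ 2 = v 0 ^ 2 + v 1 ^ 2 := by
    intro v
    rw [hg, ← Submodule.coe_norm, LinearIsometryEquiv.norm_map, EuclideanSpace.norm_sq_eq]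
    simp
  let f : (Fin 2 → ℝ) →ᵃ[ℝ] (Fin 3 → ℝ) :=
    { toFun := fun v => c0 + T (g v)
      linear := T ∘ₗ g
      map_vadd' := fun p v => by simp; abel }
  have hf : ∀ v, f v = c0 + T (g v) := fun v => rfl
  refine ⟨f, ?_, ?_⟩
  · intro v w hvw
    rw [hf, hf, add_right_inj, ← sub_eq_zero, ← map_sub, ← map_sub] at hvw
    have h1 : g (v - w) ∈ LinearMap.ker T := hvw
    have h2 : g (v - w) ∈ (LinearMap.ker T)ᗮ := by rw [hg]; exact Subtype.mem _
    have h3 : g (v - w) = 0 := by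
      have := h2 _ h1
      exact inner_self_eq_zero.1 this
    have h4 := hgn (v - w)
    rw [h3] at h4
    simp at h4
    have h5 : v 0 - w 0 = 0 := by nlinarith [sq_nonneg (v 0 - w 0), sq_nonneg (v 1 - w 1)]
    have h6 : v 1 - w 1 = 0 := by nlinarith [sq_nonneg (v 0 - w 0), sq_nonneg (v 1 - w 1)]
    ext i
    fin_cases i
    · exact sub_eq_zero.1 h5
    · exact sub_eq_zero.1 h6
  · rw [hF]
    ext y
    constructor
    · rintro ⟨x, hx, rfl⟩
      obtain ⟨k, hk, z, hz, rfl⟩ := (LinearMap.ker T).exists_add_mem_mem_orthogonal x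
      let v : Fin 2 → ℝ := (b.repr ⟨z, hz⟩).ofLp
      have hv : g v = z := by rw [hg]; simp [v]
      refine ⟨v, ?_, ?_⟩
      · have h1 : ‖k + z‖ * ‖k + z‖ = ‖k‖ * ‖k‖ + ‖z‖ * ‖z‖ :=
          norm_add_sq_eq_norm_sq_add_norm_sq_real (hz k hk)
        show v 0 ^ 2 + v 1 ^ 2 ≤ 1
        rw [← hgn, hv]
        nlinarith [norm_nonneg (k + z), norm_nonneg k, norm_nonneg z]
      · rw [hf, hv, map_add, LinearMap.mem_ker.1 hk]; simp
    · rintro ⟨v, hv, rfl⟩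
      refine ⟨g v, ?_, rfl⟩
      have : ‖g v‖ ^ 2 ≤ 1 := by rw [hgn]; exact hv
      nlinarith [norm_nonneg (g v)]

/-- Bloch traceless part -/
def Sx (x : E3) : Matrix (Fin 2) (Fin 2) ℂ :=
  !![(x 2 / 2 : ℂ), (x 0 - x 1 * Complex.I) / 2; (x 0 + x 1 * Complex.I) / 2, - (x 2 / 2)]

lemma psd_two {a d : ℝ} {c : ℂ} (ha : 0 ≤ a) (hd : 0 ≤ d) (h : Complex.normSq c ≤ a * d) :
    (!![(a : ℂ), c; star c, (d : ℂ)]).PosSemidef := by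
  rcases ha.eq_or_lt with rfl | ha
  · have hc : c = 0 := by
      rw [zero_mul] at h
      exact Complex.normSq_eq_zero.1 (le_antisymm h (Complex.normSq_nonneg c))
    subst hc
    have : (!![((0:ℝ) : ℂ), 0; star 0, (d : ℂ)]) = diagonal ![0, (d : ℂ)] := by
      ext i j; fin_cases i <;> fin_cases j <;> simp
    rw [this]
    apply PosSemidef.diagonal
    intro i; fin_cases i <;> simp [hd]
  · have h1 : (!![(a : ℂ), c; star c, (d : ℂ)]) =
        ((a⁻¹ : ℝ) : ℂ) • vecMulVec ![(a : ℂ), star c] (star ![(a : ℂ), star c]) +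
        diagonal ![0, ((d - a⁻¹ * Complex.normSq c : ℝ) : ℂ)] := by
      have ha' : (a : ℂ) ≠ 0 := by exact_mod_cast ha.ne'
      ext i j
      fin_cases i <;> fin_cases j <;> simp [vecMulVec, ha']
      · field_simp
      · rw [mul_comm ((starRingEnd ℂ) c), Complex.mul_conj]
        ring
    rw [h1]
    refine PosSemidef.add ((posSemidef_vecMulVec_self_star _).smul ?_) (PosSemidef.diagonal ?_)
    · exact_mod_cast (inv_pos.2 ha).le
    · intro i; fin_cases i
      · simp
      · have : 0 ≤ d - a⁻¹ * Complex.normSq c := by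
          rw [sub_nonneg, inv_mul_le_iff₀ ha]; exact h
        show (0:ℂ) ≤ ((d - a⁻¹ * Complex.normSq c : ℝ) : ℂ)
        exact_mod_cast this

lemma bloch {σ : Matrix (Fin 2) (Fin 2) ℂ} :
    IsDensity σ ↔ ∃ x : E3, ‖x‖ ≤ 1 ∧ σ = (1 / 2 : ℂ) • 1 + Sx x := by
  constructor
  · rintro ⟨h1, h2⟩
    have hh := h1.1
    have h00 := Complex.le_def.1 (h1.diag_nonneg (i := 0))
    have h11 := Complex.le_def.1 (h1.diag_nonneg (i := 1))
    have hdet := Complex.le_def.1 h1.det_nonneg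
    have h01 : σ 1 0 = star (σ 0 1) := (hh.apply 1 0).symm
    rw [det_fin_two, h01] at hdet
    rw [trace_fin_two] at h2
    have h2r := congrArg Complex.re h2
    simp only [Complex.add_re, Complex.one_re] at h2r
    simp only [Complex.zero_re, Complex.zero_im] at h00 h11
    simp [← h00.2, ← h11.2] at hdet
    refine ⟨!₂[2 * (σ 0 1).re, - 2 * (σ 0 1).im, 2 * (σ 0 0).re - 1], ?_, ?_⟩
    · rw [← sq_le_one_iff₀ (norm_nonneg _), EuclideanSpace.norm_sq_eq, Fin.sum_univ_three]
      simp only [Real.norm_eq_abs, sq_abs]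
      simp
      nlinarith
    · ext i j
      fin_cases i <;> fin_cases j <;> apply Complex.ext <;> simp [Sx, h01, ← h00.2, ← h11.2] <;> linarith
  · rintro ⟨x, hx, rfl⟩
    rw [← sq_le_one_iff₀ (norm_nonneg _), EuclideanSpace.norm_sq_eq, Fin.sum_univ_three] at hx
    simp only [Real.norm_eq_abs, sq_abs] at hx
    constructor
    · have h := psd_two (a := (1 + x 2) / 2) (d := (1 - x 2) / 2)
        (c := (x 0 - x 1 * Complex.I) / 2) (by nlinarith) (by nlinarith) (by
          simp [Complex.normSq_apply]; nlinarith)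
      convert h using 1
      ext i j
      fin_cases i <;> fin_cases j <;> simp [Sx] <;> ring
    · simp [Sx, trace_fin_two]

lemma elliptic2 (C : Fin 3 → Matrix (Fin 2) (Fin 2) ℂ) (hd : convDim (JNR C) = 2) :
    IsEllipticDisk (JNR C) := by
  let T : E3 →ₗ[ℝ] (Fin 3 → ℝ) :=
    { toFun := fun x => wpt C (Sx x)
      map_add' := fun x y => by
        rw [← wpt_add]; congr 1
        ext i j; fin_cases i <;> fin_cases j <;> simp [Sx] <;> ring
      map_smul' := fun t x => by
        rw [RingHom.id_apply, ← wpt_smul]; congr 1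
        ext i j; fin_cases i <;> fin_cases j <;> simp [Sx] <;> ring }
  refine elliptic_of_ball (wpt C ((1 / 2 : ℂ) • 1)) T ?_ hd
  ext y
  constructor
  · rintro ⟨σ, hσ, rfl⟩
    obtain ⟨x, hx, rfl⟩ := bloch.1 hσ
    exact ⟨x, hx, wpt_add _ _ _⟩
  · rintro ⟨x, hx, rfl⟩
    exact ⟨_, bloch.2 ⟨x, hx, rfl⟩, wpt_add _ _ _⟩

lemma convDim_subsingleton {S : Set (Fin 3 → ℝ)} (h : ∀ x ∈ S, ∀ y ∈ S, x = y) :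
    convDim S = 0 := by
  unfold convDim
  rw [Submodule.finrank_eq_zero, eq_bot_iff, direction_affineSpan, vectorSpan, Submodule.span_le]
  rintro _ ⟨x, hx, y, hy, rfl⟩
  simp [h x hx y hy]

lemma finrank_Kb {A : Fin 3 → Matrix (Fin 4) (Fin 4) ℂ} {B : Matrix (Fin 4) (Fin 4) ℂ}
    (hd : convDim (imK A B) = 2) (hE : ¬ IsEllipticDisk (imK A B)) (hB : B ≠ 0) :
    Module.finrank ℂ (Kb B) = 3 := by
  have key : ∀ m, Module.finrank ℂ (Kb B) = m → ∃ C : Fin 3 → Matrix (Fin m) (Fin m) ℂ,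
      imK A B = JNR C := by
    rintro m rfl
    let b := stdOrthonormalBasis ℂ (Kb B)
    have hb : Orthonormal ℂ (fun j => (b j : E4)) :=
      b.orthonormal.comp_linearIsometry (Kb B).subtypeₗᵢ
    exact ⟨_, param_b hb (fun j => (b j).2) rfl⟩
  have hle : Module.finrank ℂ (Kb B) ≤ 4 := by simpa using (Kb B).finrank_le
  have h4 : Module.finrank ℂ (Kb B) ≠ 4 := by
    intro h
    have ht : Kb B = ⊤ := Submodule.eq_top_of_finrank_eq (by rw [h]; simp)
    apply hB
    ext i j
    have : (WithLp.toLp 2 (Pi.single j 1) : E4) ∈ Kb B := by rw [ht]; trivial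
    have := congrFun (mem_Kb.1 this) i
    simpa using this
  have h2 : Module.finrank ℂ (Kb B) ≠ 2 := by
    intro h
    obtain ⟨C, hC⟩ := key 2 h
    rw [hC] at hd hE
    exact hE (elliptic2 C hd)
  have h1 : Module.finrank ℂ (Kb B) ≠ 1 := by
    intro h
    obtain ⟨C, hC⟩ := key 1 h
    rw [hC, convDim_subsingleton] at hd
    · omega
    · rintro _ ⟨ρ, hρ, rfl⟩ _ ⟨σ, hσ, rfl⟩
      have h1 := hρ.2
      have h2 := hσ.2
      congr 1
      ext i j
      rw [trace_fin_one] at h1 h2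
      rw [Subsingleton.elim i 0, Subsingleton.elim j 0, h1, h2]
  have h0 : Module.finrank ℂ (Kb B) ≠ 0 := by
    intro h
    obtain ⟨C, hC⟩ := key 0 h
    rw [hC, convDim_subsingleton] at hd
    · omega
    · rintro _ ⟨ρ, hρ, rfl⟩
      have h1 := hρ.2
      simp [Matrix.trace] at h1
  omega

lemma exists_unit_ker {M : Type*} [AddCommGroup M] [Module ℂ M] [FiniteDimensional ℂ M]
    {L : Submodule ℂ E4} (hL : 2 ≤ Module.finrank ℂ L)
    (φ : E4 →ₗ[ℂ] M) {N : Submodule ℂ M} (hN : Module.finrank ℂ N ≤ 1)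
    (hφ : ∀ x ∈ L, φ x ∈ N) : ∃ x ∈ L, ‖x‖ = 1 ∧ φ x = 0 := by
  have h1 := LinearMap.finrank_range_add_finrank_ker (φ.domRestrict L)
  have h2 : Module.finrank ℂ (LinearMap.range (φ.domRestrict L)) ≤ Module.finrank ℂ N := by
    apply Submodule.finrank_mono
    rintro _ ⟨x, rfl⟩
    exact hφ x x.2
  have h3 : LinearMap.ker (φ.domRestrict L) ≠ ⊥ := by
    intro h
    rw [h, finrank_bot] at h1
    omega
  obtain ⟨x, hx, hx0⟩ := Submodule.exists_mem_ne_zero_of_ne_bot h3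
  have hn : ‖(x : E4)‖ ≠ 0 := by simpa using hx0
  refine ⟨((‖(x : E4)‖⁻¹ : ℝ) : ℂ) • (x : E4), L.smul_mem _ x.2, ?_, ?_⟩
  · rw [norm_smul]; simp [hn]
  · rw [map_smul]
    have : φ x = 0 := hx
    rw [this, smul_zero]

lemma jnr3 (C : Fin 3 → Matrix (Fin 3) (Fin 3) ℂ) (h02 : ∀ i, C i 0 2 = 0)
    (h20 : ∀ i, C i 2 0 = 0) (h12 : ∀ i, C i 1 2 = 0) (h21 : ∀ i, C i 2 1 = 0)
    (h22 : ∀ i, C i 2 2 = C i 0 0) :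
    JNR C = JNR (fun i => !![C i 0 0, C i 0 1; C i 1 0, C i 1 1]) := by
  ext x
  constructor
  · rintro ⟨σ, hσ, rfl⟩
    have hM : σ.submatrix ![0, 1] ![0, 1] + diagonal ![σ 2 2, 0] =
        !![σ 0 0 + σ 2 2, σ 0 1; σ 1 0, σ 1 1] := by
      ext i j
      rw [Matrix.add_apply, submatrix_apply]
      fin_cases i <;> fin_cases j <;> simp
    refine ⟨!![σ 0 0 + σ 2 2, σ 0 1; σ 1 0, σ 1 1], ⟨?_, ?_⟩, ?_⟩
    · rw [← hM]
      refine (hσ.1.submatrix _).add (PosSemidef.diagonal ?_)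
      intro i
      fin_cases i
      · exact hσ.1.diag_nonneg
      · exact le_refl _
    · have := hσ.2
      rw [trace_fin_three] at this
      rw [trace_fin_two, ← this]
      simp
      ring
    · ext i
      simp only [wpt]
      congr 1
      rw [trace_fin_three, trace_fin_two]
      simp [Matrix.mul_apply, Fin.sum_univ_three, h02, h20, h12, h21, h22]
      ring
  · rintro ⟨σ, hσ, rfl⟩
    have hM : (Matrix.of ![![1, 0], ![0, 1], ![0, 0]] : Matrix (Fin 3) (Fin 2) ℂ) * σ *
        (Matrix.of ![![1, 0], ![0, 1], ![0, 0]] : Matrix (Fin 3) (Fin 2) ℂ)ᴴ =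
        !![σ 0 0, σ 0 1, 0; σ 1 0, σ 1 1, 0; 0, 0, 0] := by
      ext i j
      rw [Matrix.mul_apply, Fin.sum_univ_two, Matrix.mul_apply, Matrix.mul_apply,
        Fin.sum_univ_two, Fin.sum_univ_two, conjTranspose_apply, conjTranspose_apply]
      fin_cases i <;> fin_cases j <;> simp
    refine ⟨!![σ 0 0, σ 0 1, 0; σ 1 0, σ 1 1, 0; 0, 0, 0], ⟨?_, ?_⟩, ?_⟩
    · rw [← hM]
      exact hσ.1.mul_mul_conjTranspose_same _
    · have := hσ.2
      rw [trace_fin_two] at this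
      rw [trace_fin_three, ← this]
      simp
    · ext i
      simp only [wpt]
      congr 1
      rw [trace_fin_three, trace_fin_two]
      simp [Matrix.mul_apply, Fin.sum_univ_two, Fin.sum_univ_three]

/-- complex dot -/
def dotC (u : Fin 3 → ℝ) : (Fin 3 → ℂ) →ₗ[ℂ] ℂ where
  toFun z := ∑ i, (u i : ℂ) * z i
  map_add' x y := by simp [mul_add, Finset.sum_add_distrib]
  map_smul' t x := by simp [Finset.mul_sum]; congr; ext; ring

lemma dotC_apply (u : Fin 3 → ℝ) (z : Fin 3 → ℂ) : dotC u z = ∑ i, (u i : ℂ) * z i := rfl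

lemma dotC_ofReal (u d : Fin 3 → ℝ) : dotC u (fun i => (d i : ℂ)) = (dotR u d : ℂ) := by
  simp [dotC_apply, dotR]

lemma finrank_N {u v d1 d2 : Fin 3 → ℝ} (h1 : dotR u d1 = 0) (h2 : dotR v d1 ≠ 0)
    (h3 : dotR u d2 ≠ 0) :
    Module.finrank ℂ (LinearMap.ker (dotC u) ⊓ LinearMap.ker (dotC v) : Submodule ℂ (Fin 3 → ℂ)) ≤ 1 := by
  have a1 : Module.finrank ℂ (LinearMap.ker (dotC u)) < 3 := by
    have := Submodule.finrank_lt (s := LinearMap.ker (dotC u)) (by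
      intro h'
      have : (fun i => (d2 i : ℂ)) ∈ LinearMap.ker (dotC u) := by rw [h']; trivial
      rw [LinearMap.mem_ker, dotC_ofReal] at this
      exact h3 (by exact_mod_cast this))
    simpa using this
  have a2 : LinearMap.ker (dotC u) ⊓ LinearMap.ker (dotC v) < LinearMap.ker (dotC u) := by
    refine lt_of_le_of_ne inf_le_left ?_
    intro h'
    have : (fun i => (d1 i : ℂ)) ∈ LinearMap.ker (dotC u) := by
      rw [LinearMap.mem_ker, dotC_ofReal, h1]; simp
    rw [← h'] at this
    have := this.2
    rw [SetLike.mem_coe, LinearMap.mem_ker, dotC_ofReal] at this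
    exact h2 (by exact_mod_cast this)
  have := Submodule.finrank_lt_finrank_of_lt a2
  omega

lemma sum_form (A : Fin 3 → Matrix (Fin 4) (Fin 4) ℂ) (u : Fin 3 → ℝ) (c : ℝ)
    (e x : E4) (hx : x ∈ Kb (Hm A u c)) (he : inner ℂ e x = 0) :
    dotC u (fun i => star e.ofLp ⬝ᵥ (A i *ᵥ x.ofLp)) = 0 := by
  have h := mem_Kb.1 hx
  have h1 : star e.ofLp ⬝ᵥ (Hm A u c *ᵥ x.ofLp) = 0 := by rw [h]; simp
  rw [Hm, sub_mulVec, dotProduct_sub, smul_mulVec, one_mulVec, dotProduct_smul, star_dot e x, he] at h1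
  simpa [dotC_apply, sum_mulVec, dotProduct_sum, smul_mulVec] using h1

lemma case_two {A : Fin 3 → Matrix (Fin 4) (Fin 4) ℂ} (hA : ∀ i, (A i).IsHermitian)
    {u v d1 d2 : Fin 3 → ℝ} (h1 : dotR u d1 = 0) (h2 : dotR v d1 ≠ 0) (h3 : dotR u d2 ≠ 0)
    {c c' : ℝ} (hK : Module.finrank ℂ (Kb (Hm A u c)) = 3)
    (hL : 2 ≤ Module.finrank ℂ (Kb (Hm A u c) ⊓ Kb (Hm A v c') : Submodule ℂ E4))
    (hne : ¬ Kb (Hm A u c) ≤ Kb (Hm A v c')) {p : Fin 3 → ℂ}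
    (hp : ∀ x ∈ Kb (Hm A u c) ⊓ Kb (Hm A v c'), ‖x‖ = 1 → ∀ i,
      star x.ofLp ⬝ᵥ (A i *ᵥ x.ofLp) = p i) :
    ∃ C : Fin 3 → Matrix (Fin 2) (Fin 2) ℂ, imK A (Hm A u c) = JNR C := by
  set K := Kb (Hm A u c) with hKdef
  set L := K ⊓ Kb (Hm A v c') with hLdef
  obtain ⟨e, heK, heL, hen⟩ : ∃ e ∈ K, e ∈ Lᗮ ∧ ‖e‖ = 1 := by
    obtain ⟨z, hz, hz'⟩ := Set.not_subset.1 hne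
    obtain ⟨y, hy, w, hw, rfl⟩ := L.exists_add_mem_mem_orthogonal z
    have hwK : w ∈ K := by
      have := K.sub_mem hz hy.1
      simpa using this
    have hw0 : w ≠ 0 := by
      rintro rfl
      apply hz'
      simpa using hy.2
    have hn : ‖w‖ ≠ 0 := by simpa using hw0
    refine ⟨((‖w‖⁻¹ : ℝ) : ℂ) • w, K.smul_mem _ hwK, Lᗮ.smul_mem _ hw, ?_⟩
    rw [norm_smul]; simp [hn]
  let ψ : E4 →ₗ[ℂ] (Fin 3 → ℂ) :=
    { toFun := fun x i => star e.ofLp ⬝ᵥ (A i *ᵥ x.ofLp)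
      map_add' := fun x y => by ext i; simp [mulVec_add]
      map_smul' := fun t x => by ext i; simp [mulVec_smul] }
  obtain ⟨x2, hx2, hn2, hψ⟩ := exists_unit_ker hL ψ (finrank_N h1 h2 h3) (by
    intro x hx
    have he : inner ℂ e x = 0 := by
      rw [← inner_conj_symm, heL x hx]; simp
    exact ⟨sum_form A u c e x hx.1 he, sum_form A v c' e x hx.2 he⟩)
  obtain ⟨x1, hx1, hn1, h12⟩ := exists_unit_ker hL (innerₛₗ ℂ x2) (N := ⊤) (by simp) (by simp)
  have h12 : inner ℂ x2 x1 = 0 := h12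
  have h21 : inner ℂ x1 x2 = 0 := by rw [← inner_conj_symm, h12]; simp
  have h1e : inner ℂ x1 e = 0 := heL x1 hx1
  have h2e : inner ℂ x2 e = 0 := heL x2 hx2
  have he1 : inner ℂ e x1 = 0 := by rw [← inner_conj_symm, h1e]; simp
  have he2 : inner ℂ e x2 = 0 := by rw [← inner_conj_symm, h2e]; simp
  have hb : Orthonormal ℂ ![x1, e, x2] := by
    constructor
    · intro i; fin_cases i <;> simp [hn1, hn2, hen]
    · intro i j hij; fin_cases i <;> fin_cases j <;> simp_all
  have hbK : ∀ j, (![x1, e, x2] : Fin 3 → E4) j ∈ Kb (Hm A u c) := by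
    intro j; fin_cases j
    · exact hx1.1
    · exact heK
    · exact hx2.1
  -- hermitian symmetry
  have hsym : ∀ (x y : E4) i, star x.ofLp ⬝ᵥ (A i *ᵥ y.ofLp) =
      star (star y.ofLp ⬝ᵥ (A i *ᵥ x.ofLp)) := by
    intro x y i
    rw [star_dotProduct, star_mulVec, (hA i).eq, dotProduct_mulVec]
  -- homogeneous form
  have hhom : ∀ x ∈ L, ∀ i, star x.ofLp ⬝ᵥ (A i *ᵥ x.ofLp) = p i * inner ℂ x x := by
    intro x hx i
    by_cases hx0 : x = 0
    · simp [hx0]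
    have hn : ‖x‖ ≠ 0 := by simpa using hx0
    have hnc : (‖x‖ : ℂ) ≠ 0 := by exact_mod_cast hn
    have := hp (((‖x‖⁻¹ : ℝ) : ℂ) • x) (L.smul_mem _ hx) (by rw [norm_smul]; simp [hn]) i
    rw [inner_self_eq_norm_sq_to_K, ← this]
    simp [mulVec_smul]
    field_simp
  have hoff : ∀ i, star x1.ofLp ⬝ᵥ (A i *ᵥ x2.ofLp) = 0 := by
    intro i
    have q1 := hhom (x1 + x2) (L.add_mem hx1 hx2) i
    have q2 := hhom (x1 + Complex.I • x2) (L.add_mem hx1 (L.smul_mem _ hx2)) i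
    have r1 := hhom x1 hx1 i
    have r2 := hhom x2 hx2 i
    have hs := hsym x2 x1 i
    simp only [WithLp.ofLp_add, WithLp.ofLp_smul, star_add, star_smul, mulVec_add, mulVec_smul, add_dotProduct, dotProduct_add,
      smul_dotProduct, dotProduct_smul, smul_eq_mul, inner_add_left, inner_add_right,
      inner_smul_left, inner_smul_right, h12, h21, r1, r2, hs] at q1 q2
    simp only [Complex.star_def, Complex.conj_I] at q1 q2
    generalize star x1.ofLp ⬝ᵥ (A i *ᵥ x2.ofLp) = z at *
    have t1 : z + (starRingEnd ℂ) z = 0 := by linear_combination q1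
    have t2 : Complex.I * (z - (starRingEnd ℂ) z) = 0 := by
      linear_combination q2 + (p i * inner ℂ x2 x2 - p i * inner ℂ x2 x2) * Complex.I_sq
    have t3 : z - (starRingEnd ℂ) z = 0 := by
      rcases mul_eq_zero.1 t2 with h | h
      · exact absurd h Complex.I_ne_zero
      · exact h
    linear_combination (t1 + t3) / 2
  have hz : ∀ i, star e.ofLp ⬝ᵥ (A i *ᵥ x2.ofLp) = 0 := fun i => congrFun hψ i
  refine ⟨_, (param_b hb hbK hK).trans (jnr3 _ ?_ ?_ ?_ ?_ ?_)⟩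
  · intro i; rw [Vb_conj_mul]; exact hoff i
  · intro i; rw [Vb_conj_mul]
    show star x2.ofLp ⬝ᵥ (A i *ᵥ x1.ofLp) = 0
    rw [hsym, hoff]; simp
  · intro i; rw [Vb_conj_mul]; exact hz i
  · intro i; rw [Vb_conj_mul]
    show star x2.ofLp ⬝ᵥ (A i *ᵥ e.ofLp) = 0
    rw [hsym, hz]; simp
  · intro i; rw [Vb_conj_mul, Vb_conj_mul]
    exact (hp x2 hx2 hn2 i).trans (hp x1 hx1 hn1 i).symm

lemma norm_unit {x : E4} (h : ‖x‖ = 1) : star x.ofLp ⬝ᵥ x.ofLp = 1 := by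
  rw [star_dot, inner_self_eq_norm_sq_to_K, h]; simp

lemma mul_zero_of_Kb {B1 B2 : Matrix (Fin 4) (Fin 4) ℂ} (h : Kb B1 ≤ Kb B2)
    {ρ : Matrix (Fin 4) (Fin 4) ℂ} (hρ : B1 * ρ = 0) : B2 * ρ = 0 := by
  ext i j
  have h1 : (WithLp.toLp 2 (fun i => ρ i j) : E4) ∈ Kb B1 := by
    rw [mem_Kb]
    ext i
    have := congrFun (congrFun hρ i) j
    simpa [Matrix.mul_apply, mulVec, dotProduct] using this
  have h2 := congrFun (mem_Kb.1 (h h1)) i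
  simpa [Matrix.mul_apply, mulVec, dotProduct] using h2

lemma finrank_Kb_le {B : Matrix (Fin 4) (Fin 4) ℂ} (hB : B ≠ 0) :
    Module.finrank ℂ (Kb B) ≤ 3 := by
  have h : Module.finrank ℂ (Kb B) < Module.finrank ℂ E4 := by
    apply Submodule.finrank_lt
    intro ht
    apply hB
    ext i j
    have : (WithLp.toLp 2 (Pi.single j 1) : E4) ∈ Kb B := by rw [ht]; trivial
    have := congrFun (mem_Kb.1 this) i
    simpa using this
  simp at h
  omega

lemma Hm_ne_zero {A : Fin 3 → Matrix (Fin 4) (Fin 4) ℂ} (hA : ∀ i, (A i).IsHermitian)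
    {u : Fin 3 → ℝ} {c : ℝ} (h : ∀ x ∈ JNR A, c ≤ dotR u x) (h' : ∃ x ∈ JNR A, dotR u x ≠ c) :
    Hm A u c ≠ 0 := by
  intro h0
  obtain ⟨_, ⟨ρ, hρ, rfl⟩, hne⟩ := h'
  exact hne ((wpt_mem_exposed hA h hρ).2 (by rw [h0]; simp))

lemma exists_pt {A : Fin 3 → Matrix (Fin 4) (Fin 4) ℂ} (hA : ∀ i, (A i).IsHermitian)
    {u v : Fin 3 → ℝ} {c c' : ℝ} (hu : ∀ x ∈ JNR A, c ≤ dotR u x)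
    (hv : ∀ x ∈ JNR A, c' ≤ dotR v x) (hne : ¬ Kb (Hm A u c) ≤ Kb (Hm A v c')) :
    ∃ f ∈ JNR A, dotR u f = c ∧ dotR v f ≠ c' := by
  obtain ⟨z, hz, hz'⟩ := Set.not_subset.1 hne
  have hz0 : z.ofLp ≠ 0 := by
    intro h
    apply hz'
    show Hm A v c' *ᵥ z.ofLp = 0
    rw [h]; simp
  obtain ⟨r, hr, hr1⟩ := exists_unit hz0
  have hd := ket_density hr1
  refine ⟨_, ⟨_, hd, rfl⟩, (wpt_mem_exposed hA hu hd).2 (mul_ket _ _ ?_), ?_⟩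
  · rw [mulVec_smul, mem_Kb.1 hz, smul_zero]
  · intro h
    have h1 := of_mul_ket _ _ hr1 ((wpt_mem_exposed hA hv hd).1 h)
    rw [mulVec_smul] at h1
    apply hz'
    rcases smul_eq_zero.1 h1 with h2 | h2
    · exact absurd (by exact_mod_cast h2) hr.ne'
    · exact h2

lemma rank3_exposed {A : Fin 3 → Matrix (Fin 4) (Fin 4) ℂ} (hA : ∀ i, (A i).IsHermitian)
    {G : Set (Fin 3 → ℝ)} (hG : IsRank3Face A G)
    {v : Fin 3 → ℝ} {c : ℝ} (hv : ∀ x ∈ JNR A, c ≤ dotR v x)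
    (hvG : ∀ x ∈ G, dotR v x = c) (hv' : ∃ x ∈ JNR A, dotR v x ≠ c) :
    G = {x ∈ JNR A | dotR v x = c} ∧ Module.finrank ℂ (Kb (Hm A v c)) = 3 := by
  obtain ⟨-, hGf, P, hPh, hPP, hPr, hP⟩ := hG
  let S : Submodule ℂ E4 :=
    (LinearMap.range P.mulVecLin).map (WithLp.linearEquiv 2 ℂ (Fin 4 → ℂ)).symm.toLinearMap
  have hS : Module.finrank ℂ S = 3 := by
    rw [← hPr]
    exact LinearEquiv.finrank_map_eq (WithLp.linearEquiv 2 ℂ (Fin 4 → ℂ)).symm _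
  have hSP : ∀ x ∈ S, P *ᵥ x.ofLp = x.ofLp := by
    rintro _ ⟨_, ⟨y, rfl⟩, rfl⟩
    show P *ᵥ (P *ᵥ y) = P *ᵥ y
    rw [mulVec_mulVec, hPP]
  have hSK : S ≤ Kb (Hm A v c) := by
    intro z hz
    by_cases hz0 : z.ofLp = 0
    · rw [mem_Kb, hz0]; simp
    obtain ⟨r, hr, hr1⟩ := exists_unit hz0
    have hd := ket_density hr1
    have hPx : P *ᵥ ((r : ℂ) • z.ofLp) = (r : ℂ) • z.ofLp := by rw [mulVec_smul, hSP z hz]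
    have h2 : P * ket ((r : ℂ) • z.ofLp) = ket ((r : ℂ) • z.ofLp) := by
      rw [ket, Matrix.mul_vecMulVec, hPx]
    have h3 : ket ((r : ℂ) • z.ofLp) * P = ket ((r : ℂ) • z.ofLp) := by
      have := congrArg conjTranspose h2
      rwa [conjTranspose_mul, hPh, hd.1.1.eq] at this
    have h4 := hvG _ ((hP _ hd).2 (by rw [h2, h3]))
    have h1 := of_mul_ket _ _ hr1 ((wpt_mem_exposed hA hv hd).1 h4)
    rw [mulVec_smul] at h1
    rcases smul_eq_zero.1 h1 with h2 | h2
    · exact absurd (by exact_mod_cast h2) hr.ne'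
    · exact h2
  have hle := finrank_Kb_le (Hm_ne_zero hA hv hv')
  have hSe : S = Kb (Hm A v c) := Submodule.eq_of_le_of_finrank_le hSK (by omega)
  refine ⟨Set.Subset.antisymm (fun x hx => ⟨hGf.2.subset hx, hvG x hx⟩) ?_, by rw [← hSe, hS]⟩
  rintro _ ⟨⟨ρ, hρ, rfl⟩, hx⟩
  have h1 := (wpt_mem_exposed hA hv hρ).1 hx
  have h2 : Kb (Hm A v c) ≤ Kb (1 - P) := by
    rw [← hSe]
    intro x hx
    rw [mem_Kb, sub_mulVec, hSP x hx]; simp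
  have h3 := mul_zero_of_Kb h2 h1
  rw [Matrix.sub_mul, Matrix.one_mul, sub_eq_zero] at h3
  have h4 : ρ * P = ρ := by
    have := congrArg conjTranspose h3.symm
    rwa [conjTranspose_mul, hPh, hρ.1.1.eq] at this
  exact (hP ρ hρ).2 (by rw [← h3, h4])


/-- If a rank-3 face differs from a non-elliptic face, both are
two-dimensional and their intersection is a one-dimensional face of each of
them and an exposed face of `W`. -/
theorem stmt1 (A : Fin 3 → Matrix (Fin 4) (Fin 4) ℂ)
    (hA : ∀ i, (A i).IsHermitian)
    (hdim : convDim (JNR A) = 3)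
    (F G : Set (Fin 3 → ℝ))
    (hF : IsNonEllipticFace (JNR A) F)
    (hG : IsRank3Face A G) (hFG : F ≠ G) :
    convDim G = 2 ∧
      IsFaceOf F (F ∩ G) ∧ IsFaceOf G (F ∩ G) ∧ convDim (F ∩ G) = 1 ∧
      IsExposedFace (JNR A) (F ∩ G) := by
  have hWc := JNR_convex A
  obtain ⟨hFf, hFd, hFe⟩ := hF
  have hFne : F.Nonempty := by
    rw [Set.nonempty_iff_ne_empty]
    rintro rfl
    rw [convDim_subsingleton (by simp)] at hFd
    omega
  have hFW : F ≠ JNR A := by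
    rintro rfl
    omega
  obtain ⟨u, c, hu, huF, hu'⟩ := exists_support hWc hdim hFf hFne hFW
  have hFeq := face_eq_exposed hFf hFne hFd huF hu'
  have hGW : G ≠ JNR A := by
    intro h
    obtain ⟨-, -, P, hPh, hPP, hPr, hP⟩ := hG
    have hd : IsDensity ((1 / 4 : ℂ) • (1 : Matrix (Fin 4) (Fin 4) ℂ)) := by
      refine ⟨PosSemidef.one.smul ?_, by simp⟩
      rw [Complex.le_def]
      norm_num
    have h1 := (hP _ hd).1 (by rw [h]; exact ⟨_, hd, rfl⟩)
    rw [Matrix.mul_smul, Matrix.smul_mul, Matrix.mul_one, hPP] at h1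
    have h2 : P = 1 := smul_right_injective _ (by norm_num : (1 / 4 : ℂ) ≠ 0) h1
    rw [h2, rank_one] at hPr
    simp at hPr
  obtain ⟨v, c', hv, hvG, hv'⟩ := exists_support hWc hdim hG.2.1 hG.1 hGW
  obtain ⟨hGeq, hK2⟩ := rank3_exposed hA hG hv hvG hv'
  have hGf := hG.2.1
  have hFim : F = imK A (Hm A u c) := hFeq.trans (exposed_eq hA hu)
  have hGim : G = imK A (Hm A v c') := hGeq.trans (exposed_eq hA hv)
  have hK1 : Module.finrank ℂ (Kb (Hm A u c)) = 3 :=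
    finrank_Kb (hFim ▸ hFd) (hFim ▸ hFe) (Hm_ne_zero hA hu hu')
  have hKne : Kb (Hm A u c) ≠ Kb (Hm A v c') := by
    intro h
    apply hFG
    rw [hFim, hGim]
    ext x
    constructor
    · rintro ⟨ρ, ⟨h1, h2⟩, rfl⟩
      exact ⟨ρ, ⟨h1, mul_zero_of_Kb h.le h2⟩, rfl⟩
    · rintro ⟨ρ, ⟨h1, h2⟩, rfl⟩
      exact ⟨ρ, ⟨h1, mul_zero_of_Kb h.ge h2⟩, rfl⟩
  have hn12 : ¬ Kb (Hm A u c) ≤ Kb (Hm A v c') := fun h =>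
    hKne (Submodule.eq_of_le_of_finrank_eq h (by rw [hK1, hK2]))
  have hn21 : ¬ Kb (Hm A v c') ≤ Kb (Hm A u c) := fun h =>
    hKne (Submodule.eq_of_le_of_finrank_eq h (by rw [hK1, hK2])).symm
  have hL : 2 ≤ Module.finrank ℂ (Kb (Hm A u c) ⊓ Kb (Hm A v c') : Submodule ℂ E4) := by
    have h1 := Submodule.finrank_sup_add_finrank_inf_eq (Kb (Hm A u c)) (Kb (Hm A v c'))
    have h2 := (Kb (Hm A u c) ⊔ Kb (Hm A v c')).finrank_le
    simp only [finrank_euclideanSpace, Fintype.card_fin] at h2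
    omega
  obtain ⟨f, hfW, hfu, hfv⟩ := exists_pt hA hu hv hn12
  obtain ⟨k, hkW, hkv, hku⟩ := exists_pt hA hv hu hn21
  have hLpt : ∀ x ∈ Kb (Hm A u c) ⊓ Kb (Hm A v c'), ‖x‖ = 1 → wpt A (ket x.ofLp) ∈ F ∩ G := by
    intro x hx hn
    have hd := ket_density (norm_unit hn)
    rw [hFim, hGim]
    exact ⟨⟨_, ⟨hd, mul_ket _ _ hx.1⟩, rfl⟩, ⟨_, ⟨hd, mul_ket _ _ hx.2⟩, rfl⟩⟩
  obtain ⟨x0, hx0, hx0n, -⟩ := exists_unit_ker hL (0 : E4 →ₗ[ℂ] ℂ) (N := ⊥) (by simp) (by simp)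
  obtain ⟨g, hg⟩ : ∃ g, g ∈ F ∩ G := ⟨_, hLpt x0 hx0 hx0n⟩
  have hgu : dotR u g = c := huF g hg.1
  have hgv : dotR v g = c' := hvG g hg.2
  have hd1 : dotR u (f - g) = 0 := by rw [dotR_sub, hfu, hgu, sub_self]
  have hd1' : dotR v (f - g) ≠ 0 := by rw [dotR_sub, hgv]; exact sub_ne_zero.2 hfv
  have hd2 : dotR u (k - g) ≠ 0 := by rw [dotR_sub, hgu]; exact sub_ne_zero.2 hku
  have hfF : f ∈ F := by rw [hFeq]; exact ⟨hfW, hfu⟩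
  have hkG : k ∈ G := by rw [hGeq]; exact ⟨hkW, hkv⟩
  -- the intersection has positive dimension
  have hpos : convDim (F ∩ G) ≠ 0 := by
    intro h0
    obtain ⟨C, hC⟩ := case_two hA hd1 hd1' hd2 hK1 hL hn12 (p := fun i => (g i : ℂ)) (by
      intro x hx hn i
      have h1 := subsingleton_of_convDim h0 (hLpt x hx hn) hg
      have h2 := congrFun h1 i
      rw [wpt, trace_ket] at h2
      apply Complex.ext
      · simpa using h2
      · simpa using (hA i).im_star_dotProduct_mulVec_self x.ofLp)
    rw [hC] at hFim
    rw [hFim] at hFd hFe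
    exact hFe (elliptic2 C hFd)
  have hdF : convDim (F ∩ G) < convDim F := by
    apply Submodule.finrank_lt_finrank_of_lt
    refine lt_of_le_of_ne (AffineSubspace.direction_le (affineSpan_mono ℝ Set.inter_subset_left)) ?_
    intro h
    have h1 := sub_mem_dir hfF hg.1
    rw [← h] at h1
    exact hd1' (direction_le (u := v) (fun x hx => hvG x hx.2) h1)
  have hdG : convDim (F ∩ G) < convDim G := by
    apply Submodule.finrank_lt_finrank_of_lt
    refine lt_of_le_of_ne (AffineSubspace.direction_le (affineSpan_mono ℝ Set.inter_subset_right)) ?_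
    intro h
    have h1 := sub_mem_dir hkG hg.2
    rw [← h] at h1
    exact hd2 (direction_le (u := u) (fun x hx => huF x hx.1) h1)
  have hG2 : convDim G < 3 :=
    lt_of_le_of_lt (Submodule.finrank_mono (direction_le hvG)) (ker_lt_top hd1')
  have hcv : Convex ℝ (F ∩ G) := hFf.1.inter hGf.1
  have hext : IsExtreme ℝ (JNR A) (F ∩ G) := hFf.2.inter hGf.2
  refine ⟨by omega, ⟨hcv, hext.mono hFf.2.subset Set.inter_subset_left⟩,
    ⟨hcv, hext.mono hGf.2.subset Set.inter_subset_right⟩, by omega, u + v, ?_⟩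
  have huv : ∀ x, dotR (u + v) x = dotR u x + dotR v x := by
    intro x; simp [dotR, add_mul, Finset.sum_add_distrib]
  ext x
  constructor
  · intro hx
    refine ⟨hext.subset hx, fun y hy => ?_⟩
    rw [huv, huv, huF x hx.1, hvG x hx.2]
    linarith [hu y hy, hv y hy]
  · rintro ⟨hx, hmin⟩
    have h1 := hmin g (hext.subset hg)
    rw [huv, huv, hgu, hgv] at h1
    have h2 := hu x hx
    have h3 := hv x hx
    refine ⟨?_, ?_⟩
    · rw [hFeq]; exact ⟨hx, by linarith⟩
    · rw [hGeq]; exact ⟨hx, by linarith⟩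
end
end
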